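/- Let G be a finite group and k a field of characteristic p > 0 dividing |G|. There exist a finitely generated kG-module V and a filtration 0 = M_0 ⊆ M_1 ⊆ ⋯ ⊆ M_t = k ⊕ V of kG-modules such that for every i = 1,…,t there is an elementary abelian p-subgroup E_i ⊆ G and a finitely generated kE_i-module W_i with M_i/M_{i−1} ≅ (W_i)↑_{E_i}^G, the kG-module induced from W_i. -/

import Mathlib

variable {k : Type} [Field k] {G : Type} [Group G]

/-- A subgroup is elementary abelian for the prime `p` if it is commutative and every
element has order dividing `p`. -/
def IsElementaryAbelian (p : ℕ) (E : Subgroup G) : Prop :=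
  (∀ x ∈ E, x ^ p = 1) ∧ ∀ x ∈ E, ∀ y ∈ E, x * y = y * x

/-- A representation `(Q, σ)` of `G` over `k` is induced from a representation of the
subgroup `E`, `Q ≅ W↑_E^G = kG ⊗_{kE} W`, if and only if it admits an `E`-stable subspace
`W` such that `Q` is the (internal) direct sum of the translates `g • W`, one for each
left coset `g E` of `E` in `G` (imprimitivity). -/
def IsInducedFrom {Q : Type} [AddCommGroup Q] [Module k Q]
    (σ : Representation k G Q) (E : Subgroup G) : Prop :=
  ∃ W : Submodule k Q,
    (∀ e ∈ E, W.map (σ e) = W)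
    ∧ iSupIndep (fun c : G ⧸ E => W.map (σ (Quotient.out c)))
    ∧ (⨆ c : G ⧸ E, W.map (σ (Quotient.out c))) = ⊤

/-- The representation of `G` on `k ⊕ V`, acting trivially on `k`. -/
noncomputable def trivProdRep {V : Type} [AddCommGroup V] [Module k V]
    (ρ : Representation k G V) : Representation k G (k × V) where
  toFun g := (LinearMap.id : k →ₗ[k] k).prodMap (ρ g)
  map_one' := by
    apply LinearMap.ext
    intro x
    simp [Prod.ext_iff]
  map_mul' g h := by
    apply LinearMap.ext
    intro x
    simp [Prod.ext_iff]

namespace Representation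

/-- A linear map between two representations is equivariant if it commutes with the actions. -/
def IsEquivariant {V W : Type} [AddCommGroup V] [Module k V] [AddCommGroup W] [Module k W]
    (ρ : Representation k G V) (σ : Representation k G W) (f : V →ₗ[k] W) : Prop :=
  ∀ g v, f (ρ g v) = σ g (f v)

section Equivariant

variable {U V W : Type} [AddCommGroup U] [Module k U] [AddCommGroup V] [Module k V]
  [AddCommGroup W] [Module k W]
  {τ : Representation k G U} {ρ : Representation k G V} {σ : Representation k G W}

lemma IsEquivariant.comp {f : V →ₗ[k] W} {e : U →ₗ[k] V}
    (hf : IsEquivariant ρ σ f) (he : IsEquivariant τ ρ e) : IsEquivariant τ σ (f ∘ₗ e) :=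
  fun g v => by simp [he g v, hf g]

end Equivariant

section Induction

/-- The element of `H` measuring the failure of the chosen coset representatives to be
compatible with left multiplication by `g`. -/
noncomputable def cosetCocycle (H : Subgroup G) (g : G) (c : G ⧸ H) : H :=
  ⟨(g • c).out⁻¹ * (g * c.out), by
    rw [← QuotientGroup.eq, QuotientGroup.out_eq']
    conv_lhs => rw [← QuotientGroup.out_eq' c]
    rfl⟩

lemma coe_cosetCocycle (H : Subgroup G) (g : G) (c : G ⧸ H) :
    (cosetCocycle H g c : G) = (g • c).out⁻¹ * (g * c.out) := rfl

lemma cosetCocycle_mul (H : Subgroup G) (g h : G) (c : G ⧸ H) :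
    cosetCocycle H (g * h) c = cosetCocycle H g (h • c) * cosetCocycle H h c := by
  ext
  simp [coe_cosetCocycle, mul_smul, mul_assoc]

lemma cosetCocycle_one (H : Subgroup G) (c : G ⧸ H) : cosetCocycle H 1 c = 1 := by
  ext
  simp [coe_cosetCocycle]

variable {H : Subgroup G} {W : Type} [AddCommGroup W] [Module k W]

/-- The representation of `G` induced from a representation of the subgroup `H`, realised on
functions on the coset space by means of coset representatives. -/
noncomputable def indRep (σ : Representation k H W) : Representation k G (G ⧸ H → W) where
  toFun g := LinearMap.pi fun c => σ (cosetCocycle H g (g⁻¹ • c)) ∘ₗ LinearMap.proj (g⁻¹ • c)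
  map_one' := by
    ext1 f
    funext c
    simp [cosetCocycle_one]
  map_mul' g h := by
    ext1 f
    funext c
    simp [cosetCocycle_mul, mul_smul]

lemma indRep_apply (σ : Representation k H W) (g : G) (f : G ⧸ H → W) (c : G ⧸ H) :
    indRep σ g f c = σ (cosetCocycle H g (g⁻¹ • c)) (f (g⁻¹ • c)) := rfl

lemma indRep_apply_smul (σ : Representation k H W) (g : G) (f : G ⧸ H → W) (c : G ⧸ H) :
    indRep σ g f (g • c) = σ (cosetCocycle H g c) (f c) := by
  rw [indRep_apply, inv_smul_smul]

/-- Restriction of a representation to a subgroup. -/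
def resRep (H : Subgroup G) (ρ : Representation k G W) : Representation k H W :=
  ρ.comp H.subtype

lemma resRep_apply (ρ : Representation k G W) (h : H) : resRep H ρ h = ρ h := rfl

end Induction

/-- The smallest class of representations of `G` that contains the finite-dimensional
representations induced from the subgroups satisfying `S` and is closed under extensions and
direct summands. -/
inductive BuiltFrom (S : Subgroup G → Prop) :
    ∀ {V : Type} [AddCommGroup V] [Module k V], Representation k G V → Prop
  | ind {W : Type} [AddCommGroup W] [Module k W] [FiniteDimensional k W] (E : Subgroup G)
      (hE : S E) (σ : Representation k E W) : BuiltFrom S (indRep σ)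
  | ext {U V W : Type} [AddCommGroup U] [Module k U] [AddCommGroup V] [Module k V]
      [AddCommGroup W] [Module k W]
      {τ : Representation k G U} {ρ : Representation k G V} {σ : Representation k G W}
      (f : U →ₗ[k] V) (g : V →ₗ[k] W) (hf : IsEquivariant τ ρ f) (hg : IsEquivariant ρ σ g)
      (hinj : Function.Injective f) (hex : Function.Exact f g) (hsurj : Function.Surjective g)
      (hU : BuiltFrom S τ) (hW : BuiltFrom S σ) : BuiltFrom S ρ
  | retract {U V : Type} [AddCommGroup U] [Module k U] [AddCommGroup V] [Module k V]
      {τ : Representation k G U} {ρ : Representation k G V}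
      (i : V →ₗ[k] U) (r : U →ₗ[k] V) (hi : IsEquivariant ρ τ i) (hr : IsEquivariant τ ρ r)
      (hri : ∀ v, r (i v) = v) (hU : BuiltFrom S τ) : BuiltFrom S ρ

namespace BuiltFrom

variable {S : Subgroup G → Prop}
variable {U V W : Type} [AddCommGroup U] [Module k U] [AddCommGroup V] [Module k V]
  [AddCommGroup W] [Module k W]
  {τ : Representation k G U} {ρ : Representation k G V} {σ : Representation k G W}

lemma prod (hU : BuiltFrom S τ) (hW : BuiltFrom S σ) : BuiltFrom S (τ.prod σ) :=
  ext (LinearMap.inl k U W) (LinearMap.snd k U W) (fun g v => by simp [Representation.prod])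
    (fun g v => by simp [Representation.prod]) LinearMap.inl_injective
    (by rw [LinearMap.exact_iff, LinearMap.range_inl]) LinearMap.snd_surjective hU hW

lemma of_subsingleton {S : Subgroup G → Prop} (hS : ∃ E, S E) [Subsingleton V]
    (ρ : Representation k G V) : BuiltFrom S ρ := by
  obtain ⟨E, hE⟩ := hS
  exact retract (τ := indRep (1 : Representation k E PUnit)) 0 0
    (fun _ _ => by simp) (fun _ _ => by simp) (fun _ => Subsingleton.elim _ _) (ind E hE _)

lemma exists_factorization_sum {S : Subgroup G → Prop} (hS : ∃ E, S E) {ι : Type}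
    (s : Finset ι) (e : ι → V →ₗ[k] V)
    (h : ∀ j ∈ s, ∃ (U : Type) (_ : AddCommGroup U) (_ : Module k U) (τ : Representation k G U)
      (i : V →ₗ[k] U) (r : U →ₗ[k] V), BuiltFrom S τ ∧ IsEquivariant ρ τ i ∧
        IsEquivariant τ ρ r ∧ ∀ v, r (i v) = e j v) :
    ∃ (U : Type) (_ : AddCommGroup U) (_ : Module k U) (τ : Representation k G U)
      (i : V →ₗ[k] U) (r : U →ₗ[k] V), BuiltFrom S τ ∧ IsEquivariant ρ τ i ∧
        IsEquivariant τ ρ r ∧ ∀ v, r (i v) = ∑ j ∈ s, e j v := by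
  classical
  induction s using Finset.induction_on with
  | empty =>
    exact ⟨PUnit, inferInstance, inferInstance, 1, 0, 0, of_subsingleton hS _,
      fun _ _ => by simp, fun _ _ => by simp, fun _ => by simp⟩
  | insert j s hj ih =>
    obtain ⟨U, _, _, τ, i, r, hU, hi, hr, hri⟩ := ih fun j hj => h j (Finset.mem_insert_of_mem hj)
    obtain ⟨U', _, _, τ', i', r', hU', hi', hr', hri'⟩ := h j (Finset.mem_insert_self _ _)
    refine ⟨U' × U, inferInstance, inferInstance, τ'.prod τ, i'.prod i, r'.coprod r,
      hU'.prod hU, fun g v => ?_, fun g v => ?_, fun v => ?_⟩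
    · simp [Representation.prod, hi g, hi' g]
    · simp [Representation.prod, hr g, hr' g]
    · simp [Finset.sum_insert hj, hri, hri']

/-- A finite-dimensional representation whose identity is a sum of operators permuted by `G` in
the same way as a finite `G`-set is built from the stabilizers of the points of that set. -/
lemma of_partition {S : Subgroup G → Prop} (hS : ∃ E, S E) [Finite G] [FiniteDimensional k V]
    {X : Type} [Fintype X] [MulAction G X] (e : X → V →ₗ[k] V)
    (he : ∀ g x v, ρ g (e x v) = e (g • x) (ρ g v)) (hsum : ∀ v, ∑ x, e x v = v)
    (hstab : ∀ x, e x ≠ 0 → S (MulAction.stabilizer G x)) : BuiltFrom S ρ := by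
  classical
  have := Fintype.ofFinite G
  let Ω := MulAction.orbitRel.Quotient G X
  have : Fintype Ω := Fintype.ofFinite _
  let E : Ω → V →ₗ[k] V := fun ω => ∑ c : G ⧸ MulAction.stabilizer G ω.out, e (c.out • ω.out)
  have hE : ∀ v, ∑ ω, E ω v = v := by
    intro v
    conv_rhs => rw [← hsum v]
    rw [← (MulAction.selfEquivSigmaOrbitsQuotientStabilizer G X).symm.sum_comp,
      Fintype.sum_sigma]
    refine Finset.sum_congr rfl fun ω _ => ?_
    simp only [E, LinearMap.sum_apply]
    refine Finset.sum_congr rfl fun c _ => ?_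
    congr 2
    conv_rhs => rw [← QuotientGroup.out_eq' c]
    rfl
  obtain ⟨U, _, _, τ, i, r, hU, hi, hr, hri⟩ := exists_factorization_sum (ρ := ρ) hS
      Finset.univ E (fun ω _ => by
    by_cases h0 : e ω.out = 0
    · have : ∀ v, E ω v = 0 := by
        intro v
        simp only [E, LinearMap.sum_apply]
        refine Finset.sum_eq_zero fun c _ => ?_
        have := he c.out ω.out (ρ c.out⁻¹ v)
        rw [h0] at this
        simpa using this.symm
      exact ⟨PUnit, inferInstance, inferInstance, 1, 0, 0, of_subsingleton hS _,
        fun _ _ => by simp, fun _ _ => by simp, fun v => by simp [this]⟩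
    · let H := MulAction.stabilizer G ω.out
      refine ⟨G ⧸ H → V, inferInstance, inferInstance, indRep (resRep H ρ),
        LinearMap.pi fun c => ρ c.out⁻¹ ∘ₗ e (c.out • ω.out),
        ∑ c : G ⧸ H, ρ c.out ∘ₗ LinearMap.proj c, ind H (hstab _ h0) _, ?_, ?_, ?_⟩
      · intro g v
        funext c
        obtain ⟨c, rfl⟩ : ∃ c', c = g • c' := ⟨g⁻¹ • c, by simp⟩
        have hc : (g • c).out • ω.out = g • c.out • ω.out := by
          have := (cosetCocycle H g c).2
          rw [MulAction.mem_stabilizer_iff, coe_cosetCocycle, mul_smul, mul_smul,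
            inv_smul_eq_iff] at this
          exact this.symm
        rw [indRep_apply_smul, resRep_apply, coe_cosetCocycle]
        simp only [LinearMap.pi_apply, LinearMap.comp_apply, hc, ← he]
        simp [map_mul, Module.End.mul_apply]
      · intro g f
        simp only [LinearMap.sum_apply, LinearMap.comp_apply, LinearMap.proj_apply, map_sum]
        rw [← Equiv.sum_comp (MulAction.toPerm g)]
        refine Finset.sum_congr rfl fun c _ => ?_
        rw [MulAction.toPerm_apply, indRep_apply_smul, resRep_apply, coe_cosetCocycle]
        simp [map_mul, Module.End.mul_apply]
      · intro v
        simp only [E, LinearMap.sum_apply, LinearMap.comp_apply, LinearMap.proj_apply,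
          LinearMap.pi_apply, Representation.self_inv_apply]
        rfl)
  exact retract i r hi hr (fun v => by rw [hri, hE]) hU

end BuiltFrom
end Representation

namespace Representation

section Induction

variable {H : Subgroup G} {V W : Type} [AddCommGroup V] [Module k V] [AddCommGroup W] [Module k W]

lemma IsEquivariant.compLeft {ρ : Representation k H V} {σ : Representation k H W} {f : V →ₗ[k] W}
    (hf : IsEquivariant ρ σ f) :
    IsEquivariant (indRep ρ) (indRep σ) (f.compLeft (G ⧸ H)) := by
  intro g v
  funext c
  simp only [LinearMap.compLeft_apply, Function.comp_apply, indRep_apply, hf _ _]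

/-- The action of `G` on pairs of cosets which describes induction in stages. -/
noncomputable abbrev stagesAction (K : Subgroup H) : MulAction G ((G ⧸ H) × (H ⧸ K)) where
  smul g x := (g • x.1, cosetCocycle H g x.1 • x.2)
  one_smul x := Prod.ext (one_smul G x.1) (by
    change cosetCocycle H 1 x.1 • x.2 = x.2
    rw [cosetCocycle_one, one_smul])
  mul_smul g h x := Prod.ext (mul_smul g h x.1) (by
    change cosetCocycle H (g * h) x.1 • x.2 =
      cosetCocycle H g (h • x.1) • cosetCocycle H h x.1 • x.2
    rw [cosetCocycle_mul, mul_smul])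

end Induction

namespace BuiltFrom

/-- Representations induced from representations built from subgroups of `H` are built from the
conjugates of these subgroups. -/
lemma indRep_of_subgroup [Finite G] {H : Subgroup G} {T : Subgroup H → Prop}
    {S : Subgroup G → Prop} (hS : ∃ E, S E)
    (hTS : ∀ K : Subgroup H, T K → ∀ (L : Subgroup G) (g : G),
      (∀ l ∈ L, ∃ x ∈ K, (x : G) = g⁻¹ * l * g) → S L)
    {V : Type} [AddCommGroup V] [Module k V] {ρ : Representation k H V} (h : BuiltFrom T ρ) :
    BuiltFrom S (indRep ρ) := by
  classical
  induction h with
  | ext f g hf hg hinj hex hsurj hU hW ihU ihW =>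
    refine ext (f.compLeft (G ⧸ H)) (g.compLeft (G ⧸ H)) hf.compLeft hg.compLeft
      (fun a b hab => funext fun c => hinj (congrFun hab c)) (fun b => ⟨fun hb => ?_, ?_⟩)
      (fun b => ?_) ihU ihW
    · choose a ha using fun c => (hex (b c)).1 (congrFun hb c)
      exact ⟨a, funext ha⟩
    · rintro ⟨a, rfl⟩
      exact funext fun c => hex.apply_apply_eq_zero (a c)
    · choose a ha using fun c => hsurj (b c)
      exact ⟨a, funext ha⟩
  | retract i r hi hr hri hU ih =>
    exact retract (i.compLeft (G ⧸ H)) (r.compLeft (G ⧸ H)) hi.compLeft hr.compLeft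
      (fun v => funext fun c => hri (v c)) ih
  | @ind W _ _ _ K hK σ =>
    let := stagesAction K
    let : Fintype ((G ⧸ H) × (H ⧸ K)) := Fintype.ofFinite _
    refine of_partition hS (X := (G ⧸ H) × (H ⧸ K))
      (fun x => LinearMap.single k _ x.1 ∘ₗ LinearMap.single k _ x.2 ∘ₗ
        LinearMap.proj x.2 ∘ₗ LinearMap.proj x.1) ?_ ?_ ?_
    · rintro g ⟨y, x⟩ f
      have hsm : g • (y, x) = (g • y, cosetCocycle H g y • x) := rfl
      funext y' x'
      obtain ⟨y', rfl⟩ : ∃ c, y' = g • c := ⟨g⁻¹ • y', by simp⟩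
      obtain ⟨x', rfl⟩ : ∃ c, x' = cosetCocycle H g y' • c :=
        ⟨(cosetCocycle H g y')⁻¹ • x', by simp⟩
      rw [hsm, indRep_apply_smul, indRep_apply_smul]
      by_cases hy : y' = y
      · subst hy
        by_cases hx : x' = x
        · subst hx
          simp [indRep_apply_smul]
        · simp [hx]
      · simp [hy]
    · intro f
      funext y x
      rw [Finset.sum_apply, Finset.sum_apply, Fintype.sum_eq_single (y, x)]
      · simp
      · rintro ⟨y', x'⟩ hne
        by_cases hy : y = y'
        · subst hy
          have hx : x ≠ x' := fun h => hne (by rw [h])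
          simp [hx]
        · simp [hy]
    · rintro ⟨y, x⟩ -
      refine hTS K hK _ (y.out * (x.out : H)) fun l hl => ?_
      have hl' : l • (y, x) = (y, x) := hl
      have hy : l • y = y := congrArg Prod.fst hl'
      have hx : cosetCocycle H l y • x = x := congrArg Prod.snd hl'
      refine ⟨cosetCocycle K (cosetCocycle H l y) x, (cosetCocycle K _ x).2, ?_⟩
      rw [coe_cosetCocycle, hx]
      simp only [Subgroup.coe_mul, coe_cosetCocycle, hy, Subgroup.coe_inv]
      group

end BuiltFrom

section Sigma

variable {B C D : Type} [AddCommGroup B] [Module k B] [AddCommGroup C] [Module k C]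
  [AddCommGroup D] [Module k D]

variable (k G B) in
/-- The space of functions on `G` that vanish at `1`. -/
abbrev PointedFun : Submodule k (G → B) := LinearMap.ker (LinearMap.proj (1 : G))

lemma PointedFun.apply_one (f : PointedFun k G B) : f.1 1 = 0 := f.2

/-- The representation on the cokernel of the coaction map `B → (G → B)`, the cokernel being
identified with the functions that vanish at `1`. -/
def coshift (ρ : Representation k G B) : Representation k G (PointedFun k G B) where
  toFun g :=
    { toFun f := ⟨fun x => f.1 (x * g) - ρ x (f.1 g), by simp⟩
      map_add' f f' := by
        ext x
        simp only [Submodule.coe_add, Pi.add_apply, map_add]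
        abel
      map_smul' a f := by
        ext x
        simp [smul_sub] }
  map_one' := by
    ext f x
    simp [PointedFun.apply_one f]
  map_mul' g h := by
    ext f x
    simp [mul_assoc]

lemma coshift_apply (ρ : Representation k G B) (g : G) (f : PointedFun k G B) (x : G) :
    (coshift ρ g f).1 x = f.1 (x * g) - ρ x (f.1 g) := rfl

/-- Post-composition with a linear map on functions that vanish at `1`. -/
def PointedFun.map (u : B →ₗ[k] C) : PointedFun k G B →ₗ[k] PointedFun k G C where
  toFun f := ⟨fun x => u (f.1 x), by simp [PointedFun.apply_one f]⟩
  map_add' f f' := by ext x; simp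
  map_smul' a f := by ext x; simp

lemma PointedFun.map_apply (u : B →ₗ[k] C) (f : PointedFun k G B) (x : G) :
    (PointedFun.map u f).1 x = u (f.1 x) := rfl

lemma IsEquivariant.pointedFunMap {ρ : Representation k G B} {σ : Representation k G C}
    {u : B →ₗ[k] C} (hu : IsEquivariant ρ σ u) :
    IsEquivariant (coshift ρ) (coshift σ) (PointedFun.map u) := by
  intro g f
  ext x
  simp [PointedFun.map_apply, coshift_apply, hu _ _]

lemma BuiltFrom.coshift [Finite G] {S : Subgroup G → Prop} (hS : ∃ E, S E)
    (hconj : ∀ E, S E → ∀ y : G ⧸ E, S (MulAction.stabilizer G y))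
    {ρ : Representation k G B} (h : BuiltFrom S ρ) : BuiltFrom S (coshift ρ) := by
  classical
  induction h with
  | ext f g hf hg hinj hex hsurj hU hW ihU ihW =>
    refine ext (PointedFun.map f) (PointedFun.map g) hf.pointedFunMap hg.pointedFunMap
      (fun a b hab => Subtype.ext <| funext fun c => hinj (congrFun (congrArg Subtype.val hab) c))
      (fun b => ⟨fun hb => ?_, ?_⟩) (fun b => ?_) ihU ihW
    · choose a ha using fun c => (hex (b.1 c)).1 (congrFun (congrArg Subtype.val hb) c)
      exact ⟨⟨a, hinj (by simp [ha, PointedFun.apply_one b])⟩, Subtype.ext (funext ha)⟩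
    · rintro ⟨a, rfl⟩
      exact Subtype.ext <| funext fun c => hex.apply_apply_eq_zero (a.1 c)
    · choose a ha using fun c => hsurj (b.1 c)
      refine ⟨⟨fun x => a x - if x = 1 then a 1 else 0, by simp⟩, Subtype.ext (funext fun x => ?_)⟩
      by_cases hx : x = 1
      · subst hx
        simp [PointedFun.map_apply, PointedFun.apply_one b]
      · simp [PointedFun.map_apply, hx, ha]
  | retract i r hi hr hri hU ih =>
    exact retract (PointedFun.map i) (PointedFun.map r) hi.pointedFunMap hr.pointedFunMap
      (fun v => Subtype.ext <| funext fun c => hri (v.1 c)) ih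
  | @ind W _ _ _ E hE σ =>
    let : Fintype (G ⧸ E) := Fintype.ofFinite _
    refine of_partition hS (X := G ⧸ E)
      (fun y =>
        { toFun f := ⟨fun x => Pi.single (x • y) (f.1 x (x • y)), by
            simp [PointedFun.apply_one f]⟩
          map_add' f f' := by
            ext x : 2
            simp [Pi.single_add]
          map_smul' a f := by
            ext x : 2
            simp [Pi.single_smul] }) ?_ ?_ ?_
    · intro g y f
      ext x z
      obtain ⟨z, rfl⟩ : ∃ c, z = x • c := ⟨x⁻¹ • z, by simp⟩
      simp only [coshift_apply, Pi.sub_apply, LinearMap.coe_mk, AddHom.coe_mk, indRep_apply_smul,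
        mul_smul]
      by_cases hz : z = g • y
      · subst hz
        simp
      · simp [hz]
    · intro f
      ext x z
      obtain ⟨z, rfl⟩ : ∃ c, z = x • c := ⟨x⁻¹ • z, by simp⟩
      simp [Finset.sum_apply, Pi.single_apply]
    · intro y _
      exact hconj E hE y

/-- The extension of `coshift ρ` by `θ` determined by an equivariant map `β`. -/
def coshiftExt (ρ : Representation k G B) (θ : Representation k G D) (β : B →ₗ[k] D)
    (hβ : IsEquivariant ρ θ β) : Representation k G (D × PointedFun k G B) where
  toFun g :=
    { toFun x := (θ g x.1 + β (x.2.1 g), Representation.coshift ρ g x.2)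
      map_add' x y := by
        refine Prod.ext ?_ (by simp)
        simp only [Prod.fst_add, Prod.snd_add, Submodule.coe_add, Pi.add_apply, map_add]
        abel
      map_smul' a x := by simp }
  map_one' := by
    refine LinearMap.ext fun x => ?_
    simp [PointedFun.apply_one x.2]
  map_mul' g h := by
    refine LinearMap.ext fun x => Prod.ext ?_ (by simp)
    simp [coshift_apply, hβ _ _]

lemma coshiftExt_apply {ρ : Representation k G B} {θ : Representation k G D} {β : B →ₗ[k] D}
    (hβ : IsEquivariant ρ θ β) (g : G) (x : D × PointedFun k G B) :
    coshiftExt ρ θ β hβ g x = (θ g x.1 + β (x.2.1 g), coshift ρ g x.2) := rfl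

lemma BuiltFrom.coshiftExt [Finite G] {S : Subgroup G → Prop} (hS : ∃ E, S E)
    (hconj : ∀ E, S E → ∀ y : G ⧸ E, S (MulAction.stabilizer G y))
    {ρ : Representation k G B} {θ : Representation k G D} {β : B →ₗ[k] D}
    (hβ : IsEquivariant ρ θ β) (hρ : BuiltFrom S ρ) (hθ : BuiltFrom S θ) :
    BuiltFrom S (coshiftExt ρ θ β hβ) :=
  ext (LinearMap.inl k D _) (LinearMap.snd k D _) (fun g v => by simp [coshiftExt_apply])
    (fun g v => by simp [coshiftExt_apply]) LinearMap.inl_injective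
    (by rw [LinearMap.exact_iff, LinearMap.range_inl]) LinearMap.snd_surjective hθ
    (hρ.coshift hS hconj)

/-- The failure of a linear map to be equivariant, as a function on the group. -/
def equivarianceDefect (θ : Representation k G D) (ρ : Representation k G B) (φ : D →ₗ[k] B) :
    D →ₗ[k] PointedFun k G B where
  toFun c := ⟨fun x => ρ x (φ c) - φ (θ x c), by simp⟩
  map_add' c c' := by
    ext x
    simp only [map_add, Submodule.coe_add, Pi.add_apply]
    abel
  map_smul' a c := by ext x; simp [smul_sub]

lemma equivarianceDefect_apply (θ : Representation k G D) (ρ : Representation k G B)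
    (φ : D →ₗ[k] B) (c : D) (x : G) :
    (equivarianceDefect θ ρ φ c).1 x = ρ x (φ c) - φ (θ x c) := rfl

end Sigma

end Representation

/-- Over a field, a linear map factors through every linear map with a smaller kernel. -/
lemma LinearMap.exists_comp_eq_of_ker_le {A B C : Type} [AddCommGroup A] [Module k A]
    [AddCommGroup B] [Module k B] [AddCommGroup C] [Module k C] (f : A →ₗ[k] B) (u : A →ₗ[k] C)
    (h : LinearMap.ker f ≤ LinearMap.ker u) : ∃ φ : B →ₗ[k] C, ∀ a, φ (f a) = u a := by
  obtain ⟨s, hs⟩ := f.rangeRestrict.exists_rightInverse_of_surjective f.range_rangeRestrict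
  obtain ⟨φ, hφ⟩ := LinearMap.exists_extend (u ∘ₗ s)
  refine ⟨φ, fun a => ?_⟩
  have h1 : φ (f a) = u (s (f.rangeRestrict a)) := LinearMap.congr_fun hφ (f.rangeRestrict a)
  have h2 : f.rangeRestrict (s (f.rangeRestrict a)) = f.rangeRestrict a := LinearMap.congr_fun hs _
  have h3 : s (f.rangeRestrict a) - a ∈ LinearMap.ker f := by
    rw [LinearMap.mem_ker, map_sub, sub_eq_zero]
    exact congrArg Subtype.val h2
  have h4 := h h3
  rw [LinearMap.mem_ker, map_sub, sub_eq_zero] at h4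
  rw [h1, h4]

namespace Representation

section Resolution

variable {F E B C : Type} [AddCommGroup F] [Module k F] [AddCommGroup E] [Module k E]
  [AddCommGroup B] [Module k B] [AddCommGroup C] [Module k C]
  {θ : Representation k G F} {η : Representation k G E} {ρ : Representation k G B}
  {σ : Representation k G C} {d : F →ₗ[k] F} {q : F →ₗ[k] E}

lemma exists_equivariant_coshiftExt {A : Submodule k F} {u : F →ₗ[k] B} {v : B →ₗ[k] E}
    (hd : IsEquivariant θ θ d) (hq : IsEquivariant θ η q)
    (hu : IsEquivariant θ ρ u) (hv : IsEquivariant ρ η v)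
    (hA : ∀ g, ∀ c ∈ A, θ g c ∈ A) (hu0 : ∀ c ∈ A, d c = 0 → u c = 0)
    (hvu : ∀ c ∈ A, v (u c) = q (d c)) :
    ∃ u' : F →ₗ[k] E × PointedFun k G B, IsEquivariant θ (coshiftExt ρ η v hv) u' ∧
      (∀ c ∈ A, u' (d c) = 0) ∧ ∀ c, ∃ b, (u' c).1 = q c - v b := by
  obtain ⟨φ, hφ⟩ := LinearMap.exists_comp_eq_of_ker_le (d ∘ₗ A.subtype) (u ∘ₗ A.subtype)
    (fun c hc => hu0 c.1 c.2 hc)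
  have hφ' : ∀ c ∈ A, φ (d c) = u c := fun c hc => hφ ⟨c, hc⟩
  refine ⟨(q - v ∘ₗ φ).prod (equivarianceDefect θ ρ φ), fun g c => ?_, fun c hc => ?_,
    fun c => ⟨φ c, by simp⟩⟩
  · refine Prod.ext ?_ (Subtype.ext (funext fun x => ?_))
    · simp [coshiftExt_apply, equivarianceDefect_apply, hq _ _, hv _ _]
    · simp [coshiftExt_apply, equivarianceDefect_apply, coshift_apply]
  · refine Prod.ext ?_ (Subtype.ext (funext fun x => ?_))
    · simp [hφ' c hc, hvu c hc]
    · simp [equivarianceDefect_apply, hφ' c hc, ← hd _ _, hφ' _ (hA x c hc), hu _ _]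

/-- A representation that admits a finite resolution by a complex `F` is built from the given
subgroups if some quotient `E` of the complex is, provided that the cycles at the end of the
resolution vanish in `E`. -/
theorem BuiltFrom.of_resolution [Finite G] {S : Subgroup G → Prop} (hS : ∃ E, S E)
    (hconj : ∀ E, S E → ∀ y : G ⧸ E, S (MulAction.stabilizer G y))
    {D : E →ₗ[k] E} {ε : E →ₗ[k] C} (hE : BuiltFrom S η)
    (hd : IsEquivariant θ θ d) (hq : IsEquivariant θ η q) (hD : IsEquivariant η η D)
    (hε : IsEquivariant η σ ε) (Fi : ℕ → Submodule k F)
    (hFi : ∀ i g, ∀ c ∈ Fi i, θ g c ∈ Fi i)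
    (hDq : ∀ c, D (q c) = q (d c)) (hDD : ∀ x, D (D x) = 0) (hεD : ∀ x, ε (D x) = 0)
    {m : ℕ} (hm : 2 ≤ m)
    (hexact : ∀ i, 2 ≤ i → i < m → ∀ c ∈ Fi i, d c = 0 → ∃ c' ∈ Fi (i + 1), d c' = c)
    (hexact_one : ∀ c ∈ Fi 1, ε (q c) = 0 → ∃ c' ∈ Fi 2, d c' = c)
    (hsurj : ∀ s, ∃ c ∈ Fi 1, ε (q c) = s)
    (htop : ∀ c ∈ Fi m, d c = 0 → q c = 0) : BuiltFrom S σ := by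
  have key : ∀ j, j + 2 ≤ m → ∃ (B : Type) (_ : AddCommGroup B) (_ : Module k B)
      (ρ : Representation k G B) (u : F →ₗ[k] B) (v : B →ₗ[k] E), BuiltFrom S ρ ∧
        IsEquivariant θ ρ u ∧ IsEquivariant ρ η v ∧ (∀ c ∈ Fi (m - j), d c = 0 → u c = 0) ∧
        (∀ c ∈ Fi (m - j), v (u c) = q (d c)) ∧ (∀ b, D (v b) = 0) ∧ ∀ b, ε (v b) = 0 := by
    intro j
    induction j with
    | zero =>
      intro _
      exact ⟨E, inferInstance, inferInstance, η, q, D, hE, hq, hD, htop, fun c _ => hDq c, hDD, hεD⟩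
    | succ j ih =>
      intro hj
      obtain ⟨B, _, _, ρ, u, v, hB, hu, hv, hu0, hvu, hDv, hεv⟩ := ih (by omega)
      obtain ⟨u', hu', hu'0, hu'1⟩ := exists_equivariant_coshiftExt hd hq hu hv (hFi _) hu0 hvu
      refine ⟨E × PointedFun k G B, inferInstance, inferInstance,
        Representation.coshiftExt ρ η v hv, u',
        D ∘ₗ LinearMap.fst k E _, hB.coshiftExt hS hconj hv hE, hu', fun g x => ?_,
        fun c hc hc0 => ?_, fun c hc => ?_, fun b => hDD _, fun b => hεD _⟩
      · simp [coshiftExt_apply, hDv, hD _ _]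
      · obtain ⟨c', hc', rfl⟩ := hexact (m - (j + 1)) (by omega) (by omega) c hc hc0
        exact hu'0 c' (by rwa [show m - (j + 1) + 1 = m - j by omega] at hc')
      · obtain ⟨b, hb⟩ := hu'1 c
        simp [hb, hDv, hDq]
  obtain ⟨B, _, _, ρ, u, v, hB, hu, hv, hu0, hvu, hDv, hεv⟩ := key (m - 2) (by omega)
  rw [show m - (m - 2) = 2 by omega] at hu0 hvu
  obtain ⟨u', hu', hu'0, hu'1⟩ := exists_equivariant_coshiftExt hd hq hu hv (hFi _) hu0 hvu
  obtain ⟨s, hs⟩ := LinearMap.exists_comp_eq_of_ker_le (ε ∘ₗ q ∘ₗ (Fi 1).subtype)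
    (u' ∘ₗ (Fi 1).subtype) (fun c hc => by
      obtain ⟨c', hc', h⟩ := hexact_one c.1 c.2 hc
      rw [LinearMap.mem_ker, LinearMap.comp_apply, Submodule.subtype_apply, ← h]
      exact hu'0 c' hc')
  have hs' : ∀ c ∈ Fi 1, s (ε (q c)) = u' c := fun c hc => hs ⟨c, hc⟩
  refine retract (τ := Representation.coshiftExt ρ η v hv) s (ε ∘ₗ LinearMap.fst k E _)
    (fun g x => ?_) (fun g x => ?_) (fun x => ?_) (hB.coshiftExt hS hconj hv hE)
  · obtain ⟨c, hc, rfl⟩ := hsurj x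
    rw [← hε _ _, ← hq _ _, hs' _ (hFi _ g c hc), hs' c hc, hu' _ _]
  · simp [coshiftExt_apply, hεv, hε _ _]
  · obtain ⟨c, hc, rfl⟩ := hsurj x
    obtain ⟨b, hb⟩ := hu'1 c
    simp [hs' c hc, hb, hεv]

end Resolution

end Representation

lemma sum_deg_update {ι Q : Type} [DecidableEq ι] [Fintype ι] {deg : Q → ℕ} (b : ι → Q)
    (c : ι) (q : Q) :
    ∑ c', deg (Function.update b c q c') + deg (b c) = ∑ c', deg (b c') + deg q := by
  rw [← Finset.add_sum_erase _ _ (Finset.mem_univ c),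
    ← Finset.add_sum_erase (a := c) _ (fun c' => deg (b c')) (Finset.mem_univ c),
    Finset.sum_congr rfl fun c' hc' => by rw [Function.update_of_ne (Finset.ne_of_mem_erase hc')],
    Function.update_self]
  ring

section LocalOperators

variable {ι Q S : Type} [DecidableEq ι] [Fintype Q] [AddCommGroup S] [Module k S]

/-- The operator on `S`-valued functions on `ι → Q` which applies the matrix `t` to the
coordinate `c` and the endomorphism `γ` to the values. -/
def localOp (c : ι) (γ : S →ₗ[k] S) (t : Matrix Q Q k) : ((ι → Q) → S) →ₗ[k] ((ι → Q) → S) where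
  toFun f b := ∑ q, t (b c) q • γ (f (Function.update b c q))
  map_add' f f' := by
    funext b
    simp [Finset.sum_add_distrib]
  map_smul' a f := by
    funext b
    simp [Finset.smul_sum, smul_comm a]

lemma localOp_apply (c : ι) (γ : S →ₗ[k] S) (t : Matrix Q Q k) (f : (ι → Q) → S) (b : ι → Q) :
    localOp c γ t f b = ∑ q, t (b c) q • γ (f (Function.update b c q)) := rfl

lemma localOp_localOp_self (c : ι) (γ γ' : S →ₗ[k] S) (t t' : Matrix Q Q k) (f : (ι → Q) → S) :
    localOp c γ t (localOp c γ' t' f) = localOp c (γ ∘ₗ γ') (t * t') f := by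
  funext b
  simp only [localOp_apply, Function.update_self, Function.update_idem, map_sum, map_smul,
    Finset.smul_sum, Matrix.mul_apply, Finset.sum_smul, LinearMap.comp_apply, smul_smul]
  rw [Finset.sum_comm]

lemma localOp_anticomm {c c' : ι} (hc : c ≠ c') {γ γ' : S →ₗ[k] S}
    (hγ : ∀ s, γ (γ' s) = -γ' (γ s)) (t t' : Matrix Q Q k) (f : (ι → Q) → S) :
    localOp c γ t (localOp c' γ' t' f) = -localOp c' γ' t' (localOp c γ t f) := by
  funext b
  simp only [localOp_apply, Function.update_of_ne hc, Function.update_of_ne hc.symm, map_sum,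
    map_smul, Finset.smul_sum, Pi.neg_apply, ← Finset.sum_neg_distrib]
  rw [Finset.sum_comm]
  refine Finset.sum_congr rfl fun q _ => Finset.sum_congr rfl fun q' _ => ?_
  rw [hγ, Function.update_comm hc, smul_neg, smul_neg, smul_comm]

lemma localOp_add (c : ι) (γ : S →ₗ[k] S) (t t' : Matrix Q Q k) (f : (ι → Q) → S) :
    localOp c γ (t + t') f = localOp c γ t f + localOp c γ t' f := by
  funext b
  simp [localOp_apply, add_smul, Finset.sum_add_distrib]

lemma localOp_sub (c : ι) (γ : S →ₗ[k] S) (t t' : Matrix Q Q k) (f : (ι → Q) → S) :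
    localOp c γ (t - t') f = localOp c γ t f - localOp c γ t' f := by
  funext b
  simp [localOp_apply, sub_smul, Finset.sum_sub_distrib]

lemma localOp_zero (c : ι) (γ : S →ₗ[k] S) (f : (ι → Q) → S) :
    localOp c γ (0 : Matrix Q Q k) f = 0 := by
  funext b
  simp [localOp_apply]

lemma localOp_one [DecidableEq Q] (c : ι) (f : (ι → Q) → S) :
    localOp c LinearMap.id (1 : Matrix Q Q k) f = f := by
  funext b
  simp [localOp_apply, Matrix.one_apply]

variable [Fintype ι]

/-- The differential obtained by applying the local differential `δ` at all coordinates. -/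
def cellDiff (γ : ι → S →ₗ[k] S) (δ : Matrix Q Q k) : ((ι → Q) → S) →ₗ[k] ((ι → Q) → S) :=
  ∑ c, localOp c (γ c) δ

lemma cellDiff_apply (γ : ι → S →ₗ[k] S) (δ : Matrix Q Q k) (f : (ι → Q) → S) :
    cellDiff γ δ f = ∑ c, localOp c (γ c) δ f := by
  simp [cellDiff]

section Homotopy

variable {γ : ι → S →ₗ[k] S} {δ h e : Matrix Q Q k}

lemma cellDiff_cellDiff (hanti : ∀ c c', c ≠ c' → ∀ s, γ c (γ c' s) = -γ c' (γ c s))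
    (hδ : δ * δ = 0) (f : (ι → Q) → S) : cellDiff γ δ (cellDiff γ δ f) = 0 := by
  simp only [cellDiff_apply, map_sum]
  rw [← Finset.sum_product']
  refine Finset.sum_involution (fun x _ => x.swap) ?_ ?_ (fun _ _ => Finset.mem_univ _)
    (fun _ _ => Prod.swap_swap _)
  · rintro ⟨c, c'⟩ -
    by_cases hc : c = c'
    · subst hc
      simp [localOp_localOp_self, hδ, localOp_zero]
    · simp only [Prod.fst_swap, Prod.snd_swap]
      rw [localOp_anticomm (Ne.symm hc) (hanti _ _ (Ne.symm hc)), neg_add_cancel]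
  · rintro ⟨c, c'⟩ - hne heq
    obtain rfl : c' = c := congrArg Prod.fst heq
    exact hne (by simp [localOp_localOp_self, hδ, localOp_zero])

lemma cellDiff_homotopy [DecidableEq Q]
    (hanti : ∀ c c', c ≠ c' → ∀ s, γ c (γ c' s) = -γ c' (γ c s))
    (hsq : ∀ c s, γ c (γ c s) = s) (hh : δ * h + h * δ = 1 - e) (c : ι) (f : (ι → Q) → S) :
    cellDiff γ δ (localOp c (γ c) h f) + localOp c (γ c) h (cellDiff γ δ f) =
      f - localOp c LinearMap.id e f := by
  simp only [cellDiff_apply, map_sum]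
  rw [← Finset.sum_add_distrib, Fintype.sum_eq_single c]
  · have : γ c ∘ₗ γ c = LinearMap.id := LinearMap.ext (hsq c)
    rw [localOp_localOp_self, localOp_localOp_self, this, ← localOp_add, hh, localOp_sub,
      localOp_one]
  · intro c' hc'
    rw [localOp_anticomm hc' (hanti c' c hc'), neg_add_cancel]

end Homotopy

section Degree

variable {deg : Q → ℕ}

/-- The functions supported on the configurations of total degree `i`. -/
def degreePart (k : Type) [Field k] {ι Q : Type} [Fintype ι] (S : Type) [AddCommGroup S]
    [Module k S] (deg : Q → ℕ) (i : ℕ) : Submodule k ((ι → Q) → S) where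
  carrier := {f | ∀ b, ∑ c, deg (b c) ≠ i → f b = 0}
  add_mem' hf hf' b hb := by simp [hf b hb, hf' b hb]
  zero_mem' _ _ := rfl
  smul_mem' a f hf b hb := by simp [hf b hb]

lemma localOp_mem_degreePart {i j : ℕ} {t : Matrix Q Q k}
    (ht : ∀ q q', t q q' ≠ 0 → deg q' + j = deg q + i) (c : ι) (γ : S →ₗ[k] S)
    {f : (ι → Q) → S} (hf : f ∈ degreePart k S deg i) : localOp c γ t f ∈ degreePart k S deg j := by
  intro b hb
  refine Finset.sum_eq_zero fun q _ => ?_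
  by_cases h0 : t (b c) q = 0
  · rw [h0, zero_smul]
  · have h1 := ht _ _ h0
    have h2 := sum_deg_update (deg := deg) b c q
    rw [hf _ (by omega), map_zero, smul_zero]

lemma cellDiff_mem_degreePart {δ : Matrix Q Q k}
    (hδ : ∀ q q', δ q q' ≠ 0 → deg q' = deg q + 1) (γ : ι → S →ₗ[k] S) {i : ℕ}
    {f : (ι → Q) → S} (hf : f ∈ degreePart k S deg (i + 1)) :
    cellDiff γ δ f ∈ degreePart k S deg i := by
  rw [cellDiff_apply]
  exact Submodule.sum_mem _ fun c _ => localOp_mem_degreePart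
    (fun q q' hq => by rw [hδ q q' hq]; ring) c _ hf

lemma cellDiff_eq_zero_of_degree_zero {δ : Matrix Q Q k}
    (hδ : ∀ q q', δ q q' ≠ 0 → deg q' = deg q + 1) (γ : ι → S →ₗ[k] S)
    {f : (ι → Q) → S} (hf : f ∈ degreePart k S deg 0) : cellDiff γ δ f = 0 := by
  rw [cellDiff_apply]
  refine Finset.sum_eq_zero fun c _ => funext fun b => Finset.sum_eq_zero fun q _ => ?_
  by_cases h0 : δ (b c) q = 0
  · rw [h0, zero_smul]
  · have h1 := hδ _ _ h0
    have h2 := sum_deg_update (deg := deg) b c q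
    rw [hf _ (by omega), map_zero, smul_zero]

variable [DecidableEq Q] {γ : ι → S →ₗ[k] S} {δ h e : Matrix Q Q k}

lemma exists_cellDiff_eq (hanti : ∀ c c', c ≠ c' → ∀ s, γ c (γ c' s) = -γ c' (γ c s))
    (hsq : ∀ c s, γ c (γ c s) = s) (hδδ : δ * δ = 0) (hh : δ * h + h * δ = 1 - e)
    (hdeg_h : ∀ q q', h q q' ≠ 0 → deg q = deg q' + 1)
    (hdeg_e : ∀ q q', e q q' ≠ 0 → deg q = 2 ∧ deg q' = 2) {i : ℕ} (hi : i ≠ 2 * Fintype.card ι)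
    {f : (ι → Q) → S} (hf : f ∈ degreePart k S deg i) (hdf : cellDiff γ δ f = 0) :
    ∃ f' ∈ degreePart k S deg (i + 1), cellDiff γ δ f' = f := by
  have key : ∀ s : Finset ι, ∃ y ∈ degreePart k S deg (i + 1), ∃ x ∈ degreePart k S deg i,
      cellDiff γ δ x = 0 ∧ f = cellDiff γ δ y + x ∧ ∀ b, ∀ c ∈ s, deg (b c) ≠ 2 → x b = 0 := by
    intro s
    induction s using Finset.induction_on with
    | empty => exact ⟨0, Submodule.zero_mem _, f, hf, hdf, by simp, by simp⟩
    | insert c s hc ih =>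
      obtain ⟨y, hy, x, hx, hdx, hfx, hxs⟩ := ih
      have hhom := cellDiff_homotopy hanti hsq hh c x
      rw [hdx, map_zero, add_zero] at hhom
      have hx' : x = cellDiff γ δ (localOp c (γ c) h x) + localOp c LinearMap.id e x := by
        rw [hhom, sub_add_cancel]
      refine ⟨y + localOp c (γ c) h x, Submodule.add_mem _ hy (localOp_mem_degreePart
          (fun q q' hq => by rw [hdeg_h q q' hq]; ring) c _ hx), localOp c LinearMap.id e x,
        localOp_mem_degreePart (fun q q' hq => by rw [(hdeg_e q q' hq).1, (hdeg_e q q' hq).2])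
          c _ hx, ?_, ?_, ?_⟩
      · have := congrArg (cellDiff γ δ) hx'
        rwa [map_add, cellDiff_cellDiff hanti hδδ, zero_add, hdx, eq_comm] at this
      · rw [map_add, add_assoc, ← hx', hfx]
      · intro b c' hc' hb
        refine Finset.sum_eq_zero fun q _ => ?_
        by_cases h0 : e (b c) q = 0
        · rw [h0, zero_smul]
        · have hne : c' ≠ c := by
            rintro rfl
            exact hb (hdeg_e _ _ h0).1
          rw [hxs _ c' ((Finset.mem_insert.1 hc').resolve_left hne)
            (by rwa [Function.update_of_ne hne]), map_zero, smul_zero]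
  obtain ⟨y, hy, x, hx, -, hfx, hxs⟩ := key Finset.univ
  have : x = 0 := by
    funext b
    by_cases hb : ∀ c, deg (b c) = 2
    · exact hx b (by simpa [hb, mul_comm] using hi.symm)
    · push Not at hb
      obtain ⟨c, hc⟩ := hb
      exact hxs b c (Finset.mem_univ c) hc
  exact ⟨y, hy, by rw [hfx, this, add_zero]⟩

lemma apply_vadd_eq_of_cellDiff_eq_zero {A : Type} [AddGroup A] [AddAction A Q]
    (hanti : ∀ c c', c ≠ c' → ∀ s, γ c (γ c' s) = -γ c' (γ c s))
    (hsq : ∀ c s, γ c (γ c s) = s) (hh : δ * h + h * δ = 1 - e)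
    (hdeg_h : ∀ q q', h q q' ≠ 0 → deg q = deg q' + 1) (hdeg : ∀ q, deg q ≤ 2)
    (he : ∀ (a : A) q q', e (a +ᵥ q) q' = e q q')
    {f : (ι → Q) → S} (hf : f ∈ degreePart k S deg (2 * Fintype.card ι))
    (hdf : cellDiff γ δ f = 0) (a : A) (b : ι → Q) : f (a +ᵥ b) = f b := by
  have hfe : ∀ c, localOp c LinearMap.id e f = f := by
    intro c
    have hhom := cellDiff_homotopy hanti hsq hh c f
    have h0 : localOp c (γ c) h f = 0 := by
      funext b
      refine localOp_mem_degreePart (j := 2 * Fintype.card ι + 1)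
        (fun q q' hq => by rw [hdeg_h q q' hq]; ring) c (γ c) hf b ?_
      have : ∑ c, deg (b c) ≤ ∑ c : ι, 2 := Finset.sum_le_sum fun c _ => hdeg (b c)
      simp at this
      omega
    rw [hdf, h0, map_zero, map_zero, add_zero, eq_comm, sub_eq_zero] at hhom
    exact hhom.symm
  have hupd : ∀ b c, f (Function.update b c (a +ᵥ b c)) = f b := by
    intro b c
    conv_lhs => rw [← hfe c]
    conv_rhs => rw [← hfe c]
    simp [localOp_apply, he]
  have key : ∀ s : Finset ι, f (s.piecewise (a +ᵥ b) b) = f b := by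
    intro s
    induction s using Finset.induction_on with
    | empty => simp
    | insert c s hc ih =>
      rw [Finset.piecewise_insert, ← ih, ← hupd (s.piecewise (a +ᵥ b) b) c,
        Finset.piecewise_eq_of_notMem _ _ _ hc]
      rfl
  simpa using key Finset.univ

end Degree

end LocalOperators

/-- The cells of the augmented chain complex of a polygon with `p` edges. -/
inductive Cell (p : ℕ)
  | empty
  | vertex (a : ZMod p)
  | edge (a : ZMod p)
deriving DecidableEq

namespace Cell

variable {p : ℕ}

/-- Cells as a disjoint union. -/
def equivOption (p : ℕ) : Cell p ≃ Option (ZMod p ⊕ ZMod p) where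
  toFun
    | empty => none
    | vertex a => some (.inl a)
    | edge a => some (.inr a)
  invFun
    | none => empty
    | some (.inl a) => vertex a
    | some (.inr a) => edge a
  left_inv q := by cases q <;> rfl
  right_inv q := by rcases q with _ | _ | _ <;> rfl

instance [NeZero p] : Fintype (Cell p) := Fintype.ofEquiv _ (equivOption p).symm

lemma sum_eq [NeZero p] {M : Type} [AddCommMonoid M] (f : Cell p → M) :
    ∑ q, f q = f empty + (∑ a, f (vertex a) + ∑ a, f (edge a)) := by
  rw [← (equivOption p).symm.sum_comp, Fintype.sum_option, Fintype.sum_sum_type]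
  rfl

/-- The rotations of the polygon. -/
instance : AddAction (ZMod p) (Cell p) where
  vadd a
    | empty => empty
    | vertex b => vertex (a + b)
    | edge b => edge (a + b)
  zero_vadd q := by
    cases q
    exacts [rfl, congrArg vertex (zero_add _), congrArg edge (zero_add _)]
  add_vadd a b q := by
    cases q
    exacts [rfl, congrArg vertex (add_assoc _ _ _), congrArg edge (add_assoc _ _ _)]

@[simp] lemma vadd_empty (a : ZMod p) : a +ᵥ (empty : Cell p) = empty := rfl
@[simp] lemma vadd_vertex (a b : ZMod p) : a +ᵥ vertex b = vertex (a + b) := rfl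
@[simp] lemma vadd_edge (a b : ZMod p) : a +ᵥ edge b = edge (a + b) := rfl

/-- The dimension of a cell plus one. -/
def deg : Cell p → ℕ
  | empty => 0
  | vertex _ => 1
  | edge _ => 2

lemma deg_le (q : Cell p) : deg q ≤ 2 := by cases q <;> simp [deg]

lemma deg_eq_zero {q : Cell p} : deg q = 0 ↔ q = empty := by cases q <;> simp [deg]

@[simp] lemma deg_vadd (a : ZMod p) (q : Cell p) : deg (a +ᵥ q) = deg q := by cases q <;> rfl

lemma vadd_right_cancel {a b : ZMod p} {q : Cell p} (hq : q ≠ empty) (h : a +ᵥ q = b +ᵥ q) :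
    a = b := by
  cases q <;> simp_all

variable (k p)

/-- The augmented boundary of the polygon. -/
def boundary : Matrix (Cell p) (Cell p) k
  | empty, vertex _ => 1
  | vertex a, edge b => (if a = b + 1 then 1 else 0) - if a = b then 1 else 0
  | _, _ => 0

/-- A contracting homotopy of the augmented chain complex of the polygon below its top
homology. -/
def homotopy : Matrix (Cell p) (Cell p) k
  | vertex a, empty => if a = 0 then 1 else 0
  | edge a, vertex b => if a.val < b.val then 1 else 0
  | _, _ => 0

/-- A projection onto the top homology of the polygon. -/
def fundamental : Matrix (Cell p) (Cell p) k
  | edge _, edge b => if b = -1 then 1 else 0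
  | _, _ => 0

variable {k p}

lemma boundary_vadd (a : ZMod p) (q q' : Cell p) :
    boundary k p (a +ᵥ q) (a +ᵥ q') = boundary k p q q' := by
  cases q <;> cases q' <;> simp [boundary, add_assoc]

lemma fundamental_vadd (a : ZMod p) (q q' : Cell p) :
    fundamental k p (a +ᵥ q) q' = fundamental k p q q' := by
  cases q <;> cases q' <;> rfl

lemma deg_of_boundary_ne_zero (q q' : Cell p) (h : boundary k p q q' ≠ 0) :
    deg q' = deg q + 1 := by
  cases q <;> cases q' <;> first | rfl | exact absurd rfl h

lemma deg_of_homotopy_ne_zero (q q' : Cell p) (h : homotopy k p q q' ≠ 0) :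
    deg q = deg q' + 1 := by
  cases q <;> cases q' <;> first | rfl | exact absurd rfl h

lemma deg_of_fundamental_ne_zero (q q' : Cell p) (h : fundamental k p q q' ≠ 0) :
    deg q = 2 ∧ deg q' = 2 := by
  cases q <;> cases q' <;> first | exact ⟨rfl, rfl⟩ | exact absurd rfl h

lemma boundary_mul_boundary [NeZero p] : boundary k p * boundary k p = 0 := by
  ext q q'
  rw [Matrix.mul_apply, sum_eq]
  cases q <;> cases q' <;> simp [boundary, Finset.sum_sub_distrib]

lemma val_sub_one_of_ne_zero [Fact p.Prime] {a : ZMod p} (ha : a ≠ 0) :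
    (a - 1).val + 1 = a.val := by
  have : (1 : ZMod p).val = 1 := ZMod.val_one p
  have h0 : a.val ≠ 0 := by rwa [Ne, ZMod.val_eq_zero]
  rw [ZMod.val_sub (by omega), this]
  omega

lemma val_neg_one_add_one [Fact p.Prime] : (-1 : ZMod p).val + 1 = p := by
  obtain ⟨n, rfl⟩ : ∃ n, p = n + 1 := ⟨p - 1, by have := (Fact.out : p.Prime).pos; omega⟩
  rw [ZMod.val_neg_one]

lemma boundary_homotopy [Fact p.Prime] :
    boundary k p * homotopy k p + homotopy k p * boundary k p = 1 - fundamental k p := by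
  ext q q'
  rw [Matrix.add_apply, Matrix.mul_apply, Matrix.mul_apply, sum_eq, sum_eq, Matrix.sub_apply,
    Matrix.one_apply]
  cases q with
  | empty => cases q' <;> simp [boundary, homotopy, fundamental]
  | vertex a =>
    cases q' with
    | empty => simp [boundary, homotopy, fundamental]
    | vertex b =>
      have hadd : ∀ i, a = i + 1 ↔ a - 1 = i := fun i => sub_eq_iff_eq_add.symm
      simp only [boundary, homotopy, fundamental, hadd, sub_mul, ite_mul, one_mul, zero_mul,
        Finset.sum_sub_distrib, Finset.sum_ite_eq, Finset.mem_univ, if_true, mul_one, mul_zero,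
        Finset.sum_const_zero, add_zero, zero_add, sub_zero, Cell.vertex.injEq]
      by_cases ha : a = 0
      · subst ha
        have h1 := val_neg_one_add_one (p := p)
        have h2 := ZMod.val_lt b
        have h3 : (0 : ZMod p) = b ↔ ¬ 0 < b.val := by
          rw [Nat.pos_iff_ne_zero, not_not, ZMod.val_eq_zero, eq_comm]
        simp only [zero_sub, ZMod.val_zero, h3, if_true,
          if_neg (show ¬ (-1 : ZMod p).val < b.val by omega)]
        split_ifs <;> simp
      · have h1 := val_sub_one_of_ne_zero ha
        have h3 : a = b ↔ a.val = b.val := (ZMod.val_injective p).eq_iff.symm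
        simp only [h3, if_neg ha]
        split_ifs <;> first | omega | simp
    | edge b => simp [boundary, homotopy, fundamental]
  | edge a =>
    cases q' with
    | empty => simp [boundary, homotopy, fundamental]
    | vertex b => simp [boundary, homotopy, fundamental]
    | edge b =>
      simp only [boundary, homotopy, fundamental, mul_sub, mul_ite, mul_one, mul_zero,
        Finset.sum_sub_distrib, Finset.sum_ite_eq', Finset.mem_univ, if_true,
        Finset.sum_const_zero, add_zero, zero_add, Cell.edge.injEq]
      have h3 : a = b ↔ a.val = b.val := (ZMod.val_injective p).eq_iff.symm
      by_cases hb : b = -1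
      · subst hb
        have h1 := val_neg_one_add_one (p := p)
        have h2 := ZMod.val_lt a
        simp only [h3, neg_add_cancel, ZMod.val_zero, if_true]
        split_ifs <;> first | omega | simp
      · have hb' : b + 1 ≠ 0 := fun h => hb (eq_neg_of_add_eq_zero_left h)
        have h1 := val_sub_one_of_ne_zero hb'
        rw [add_sub_cancel_right] at h1
        simp only [h3, if_neg hb]
        split_ifs <;> first | omega | simp

end Cell

namespace Representation

section Sphere

variable {S : Type} [AddCommGroup S] [Module k S]

/-- The representation on `S`-valued functions on a `G`-set. -/
def funRep (X : Type) [MulAction G X] (σ : Representation k G S) : Representation k G (X → S) where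
  toFun g := LinearMap.pi fun b => σ g ∘ₗ LinearMap.proj (g⁻¹ • b)
  map_one' := by
    refine LinearMap.ext fun f => ?_
    funext b
    simp
  map_mul' g h := by
    refine LinearMap.ext fun f => ?_
    funext b
    simp [mul_smul]

lemma funRep_apply {X : Type} [MulAction G X] (σ : Representation k G S) (g : G) (f : X → S)
    (b : X) : funRep X σ g f b = σ g (f (g⁻¹ • b)) := rfl

lemma funRep_apply_smul {X : Type} [MulAction G X] (σ : Representation k G S) (g : G) (f : X → S)
    (b : X) : funRep X σ g f (g • b) = σ g (f b) := by
  rw [funRep_apply, inv_smul_smul]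

variable {p : ℕ} {ι : Type} [MulAction G ι] [MulAction G (ι → Cell p)] {κ : G → ι → ZMod p}

lemma smul_vadd_of_twisted
    (hact : ∀ g (b : ι → Cell p) c, (g • b) (g • c) = κ g c +ᵥ b c) (g : G) (a : ZMod p)
    (b : ι → Cell p) : g • (a +ᵥ b) = a +ᵥ (g • b) := by
  funext c
  obtain ⟨c, rfl⟩ : ∃ c', c = g • c' := ⟨g⁻¹ • c, by simp⟩
  rw [Pi.vadd_apply, hact, hact, Pi.vadd_apply, vadd_vadd, vadd_vadd, add_comm]

lemma smul_update_of_twisted [DecidableEq ι]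
    (hact : ∀ g (b : ι → Cell p) c, (g • b) (g • c) = κ g c +ᵥ b c) (g : G)
    (b : ι → Cell p) (c : ι) (q : Cell p) :
    g • Function.update b c q = Function.update (g • b) (g • c) (κ g c +ᵥ q) := by
  funext c'
  obtain ⟨c', rfl⟩ : ∃ c'', c' = g • c'' := ⟨g⁻¹ • c', by simp⟩
  rw [hact]
  by_cases hc : c' = c
  · subst hc
    simp
  · rw [Function.update_of_ne hc, Function.update_of_ne (by simpa using hc), hact]

lemma sum_deg_smul [Fintype ι]
    (hact : ∀ g (b : ι → Cell p) c, (g • b) (g • c) = κ g c +ᵥ b c) (g : G)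
    (b : ι → Cell p) : ∑ c, ((g • b) c).deg = ∑ c, (b c).deg := by
  rw [← Equiv.sum_comp (MulAction.toPerm g)]
  simp [hact]

/-- A configuration which is fixed up to rotation by a group acting transitively on the
coordinates is empty if the twist is not a coboundary for homomorphisms to `ℤ/p`. -/
lemma eq_empty_of_smul_mem_orbit [MulAction.IsPretransitive G ι]
    (hact : ∀ g (b : ι → Cell p) c, (g • b) (g • c) = κ g c +ᵥ b c)
    {z : G} {c₀ : ι} (hz : z • c₀ = c₀) (hκz : κ z c₀ ≠ 0)
    (hker : ∀ ψ : G →* Multiplicative (ZMod p), ψ z = 1) {b : ι → Cell p}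
    (hb : ∀ g : G, ∃ a : ZMod p, g • b = a +ᵥ b) (c : ι) : b c = .empty := by
  by_contra hc
  choose ψ hψ using hb
  have hne : b c₀ ≠ .empty := by
    obtain ⟨g, hg⟩ := MulAction.exists_smul_eq G c₀ c
    intro h0
    have := hact g b c₀
    rw [hψ, hg, h0, Pi.vadd_apply, Cell.vadd_empty] at this
    generalize b c = q at this hc
    cases q <;> simp_all
  let Ψ : G →* Multiplicative (ZMod p) := MonoidHom.mk' (fun g => Multiplicative.ofAdd (ψ g))
    (fun g h => by
      rw [← ofAdd_add]
      congr 1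
      refine Cell.vadd_right_cancel hne ?_
      have h1 : (ψ (g * h) +ᵥ b) c₀ = ((ψ g + ψ h) +ᵥ b) c₀ := by
        rw [← hψ, mul_smul, hψ h, smul_vadd_of_twisted hact, hψ g, vadd_vadd, add_comm]
      exact h1)
  have h0 : ψ z = 0 := Multiplicative.ofAdd.injective (hker Ψ)
  have h1 := hact z b c₀
  rw [hψ, hz, h0, zero_vadd] at h1
  exact hκz (Cell.vadd_right_cancel hne (by rw [← h1, zero_vadd]))

variable [Fact p.Prime]

/-- Summation over the rotations of a configuration. -/
def rotationSum (k : Type) [Field k] (p : ℕ) [Fact p.Prime] (ι S : Type) [AddCommGroup S]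
    [Module k S] : ((ι → Cell p) → S) →ₗ[k] ((ι → Cell p) → S) where
  toFun f b := ∑ a : ZMod p, f (a +ᵥ b)
  map_add' f f' := by
    funext b
    simp [Finset.sum_add_distrib]
  map_smul' a f := by
    funext b
    simp [Finset.smul_sum]

lemma rotationSum_apply (f : (ι → Cell p) → S) (b : ι → Cell p) :
    rotationSum k p ι S f b = ∑ a : ZMod p, f (a +ᵥ b) := rfl

lemma funRep_rotationSum (hact : ∀ g (b : ι → Cell p) c, (g • b) (g • c) = κ g c +ᵥ b c)
    (σ : Representation k G S) :
    IsEquivariant (funRep _ σ) (funRep _ σ) (rotationSum k p ι S) := by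
  intro g f
  funext b
  simp [rotationSum_apply, funRep_apply, map_sum, smul_vadd_of_twisted hact]

variable [Fintype ι] [DecidableEq ι]

lemma rotationSum_cellDiff (γ : ι → S →ₗ[k] S) (f : (ι → Cell p) → S) :
    rotationSum k p ι S (cellDiff γ (Cell.boundary k p) f) =
      cellDiff γ (Cell.boundary k p) (rotationSum k p ι S f) := by
  funext b
  simp only [rotationSum_apply, cellDiff_apply, Finset.sum_apply, localOp_apply, map_sum,
    Finset.smul_sum]
  rw [Finset.sum_comm]
  refine Finset.sum_congr rfl fun c _ => ?_
  conv_rhs => rw [Finset.sum_comm]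
  refine Finset.sum_congr rfl fun a _ => ?_
  rw [← Equiv.sum_comp (AddAction.toPerm a)]
  refine Finset.sum_congr rfl fun q _ => ?_
  rw [AddAction.toPerm_apply, Pi.vadd_apply, Cell.boundary_vadd]
  congr 3
  funext c'
  by_cases hc : c' = c
  · subst hc
    simp
  · simp [hc]

lemma funRep_cellDiff (hact : ∀ g (b : ι → Cell p) c, (g • b) (g • c) = κ g c +ᵥ b c)
    {σ : Representation k G S} {γ : ι → S →ₗ[k] S}
    (hσγ : ∀ g c s, σ g (γ c s) = γ (g • c) (σ g s)) :
    IsEquivariant (funRep _ σ) (funRep _ σ) (cellDiff γ (Cell.boundary k p)) := by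
  intro g f
  funext b
  obtain ⟨b, rfl⟩ : ∃ b', b = g • b' := ⟨g⁻¹ • b, by simp⟩
  rw [funRep_apply_smul]
  simp only [cellDiff_apply, Finset.sum_apply, localOp_apply, map_sum]
  rw [← Equiv.sum_comp (MulAction.toPerm g)]
  refine Finset.sum_congr rfl fun c _ => ?_
  rw [← Equiv.sum_comp (AddAction.toPerm (κ g c))]
  refine Finset.sum_congr rfl fun q _ => ?_
  rw [AddAction.toPerm_apply, MulAction.toPerm_apply, hact, Cell.boundary_vadd,
    ← smul_update_of_twisted hact, funRep_apply_smul, map_smul, hσγ]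

end Sphere

end Representation

namespace Representation

section Sphere

variable {S : Type} [AddCommGroup S] [Module k S] {p : ℕ} [Fact p.Prime] {ι : Type} [Fintype ι]

/-- The functions whose rotation sums vanish on all nonempty configurations. -/
def rotationKernel (k : Type) [Field k] (p : ℕ) [Fact p.Prime] (ι S : Type) [Fintype ι]
    [AddCommGroup S] [Module k S] : Submodule k ((ι → Cell p) → S) where
  carrier := {f | ∀ b, ∑ c, (b c).deg ≠ 0 → rotationSum k p ι S f b = 0}
  add_mem' hf hf' b hb := by simp [hf b hb, hf' b hb]
  zero_mem' _ _ := by simp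
  smul_mem' a f hf b hb := by simp [hf b hb]

lemma cellDiff_mem_rotationKernel [DecidableEq ι] (γ : ι → S →ₗ[k] S) {f : (ι → Cell p) → S}
    (hf : f ∈ rotationKernel k p ι S) :
    cellDiff γ (Cell.boundary k p) f ∈ rotationKernel k p ι S := by
  intro b hb
  rw [rotationSum_cellDiff, cellDiff_apply, Finset.sum_apply]
  refine Finset.sum_eq_zero fun c _ => Finset.sum_eq_zero fun q _ => ?_
  by_cases h0 : Cell.boundary k p (b c) q = 0
  · rw [h0, zero_smul]
  · have h1 := Cell.deg_of_boundary_ne_zero _ _ h0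
    have h2 := sum_deg_update (deg := Cell.deg) b c q
    rw [hf _ (by omega), map_zero, smul_zero]

lemma cellDiff_apply_empty [DecidableEq ι] (γ : ι → S →ₗ[k] S) {f : (ι → Cell p) → S}
    (hf : f ∈ rotationKernel k p ι S) :
    cellDiff γ (Cell.boundary k p) f (fun _ => .empty) = 0 := by
  rw [cellDiff_apply, Finset.sum_apply]
  refine Finset.sum_eq_zero fun c _ => ?_
  have h := hf (Function.update (fun _ => .empty) c (.vertex 0)) (by
    have := sum_deg_update (deg := Cell.deg) (fun _ => (.empty : Cell p)) c (.vertex 0)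
    simp only [Cell.deg] at this ⊢
    omega)
  have h1 : ∀ a : ZMod p, a +ᵥ Function.update (fun _ => (.empty : Cell p)) c (.vertex 0) =
      Function.update (fun _ => .empty) c (.vertex a) := by
    intro a
    funext c'
    by_cases hc : c' = c
    · subst hc
      simp
    · simp [hc]
  simp only [rotationSum_apply, h1] at h
  rw [localOp_apply, Cell.sum_eq]
  simp [Cell.boundary, ← map_sum, h]

variable [MulAction G ι] [MulAction G (ι → Cell p)] {κ : G → ι → ZMod p}

lemma funRep_mem_rotationKernel
    (hact : ∀ g (b : ι → Cell p) c, (g • b) (g • c) = κ g c +ᵥ b c) (σ : Representation k G S)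
    (g : G) : rotationKernel k p ι S ≤ (rotationKernel k p ι S).comap (funRep _ σ g) := by
  intro f hf b hb
  rw [funRep_rotationSum hact, funRep_apply, hf _ (by rwa [sum_deg_smul hact]), map_zero]

/-- The quotient of the complex of functions by the kernel of the rotation sums. -/
def rotationQuotient (hact : ∀ g (b : ι → Cell p) c, (g • b) (g • c) = κ g c +ᵥ b c)
    (σ : Representation k G S) :
    Representation k G (((ι → Cell p) → S) ⧸ rotationKernel k p ι S) :=
  (funRep (ι → Cell p) σ).quotient _ (funRep_mem_rotationKernel hact σ)

lemma rotationQuotient_mk (hact : ∀ g (b : ι → Cell p) c, (g • b) (g • c) = κ g c +ᵥ b c)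
    (σ : Representation k G S) (g : G) (f : (ι → Cell p) → S) :
    rotationQuotient hact σ g (Submodule.Quotient.mk f) =
      Submodule.Quotient.mk (funRep _ σ g f) := rfl

open scoped Classical Pointwise in
lemma builtFrom_rotationQuotient [Finite G] [Nontrivial G] [MulAction.IsPretransitive G ι]
    [FiniteDimensional k S]
    (hact : ∀ g (b : ι → Cell p) c, (g • b) (g • c) = κ g c +ᵥ b c)
    {z : G} {c₀ : ι} (hz : z • c₀ = c₀) (hκz : κ z c₀ ≠ 0)
    (hker : ∀ ψ : G →* Multiplicative (ZMod p), ψ z = 1) (σ : Representation k G S) :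
    BuiltFrom (· ≠ ⊤) (rotationQuotient (k := k) hact σ) := by
  let orb : (ι → Cell p) → Set (ι → Cell p) := fun b => AddAction.orbit (ZMod p) b
  have horb : ∀ (g : G) b, g • orb b = orb (g • b) := by
    intro g b
    ext b'
    simp only [orb, Set.mem_smul_set, AddAction.mem_orbit_iff]
    constructor
    · rintro ⟨_, ⟨a, rfl⟩, rfl⟩
      exact ⟨a, (smul_vadd_of_twisted hact g a b).symm⟩
    · rintro ⟨a, rfl⟩
      exact ⟨_, ⟨a, rfl⟩, smul_vadd_of_twisted hact g a b⟩
  let r : Set (ι → Cell p) → ((ι → Cell p) → S) →ₗ[k] ((ι → Cell p) → S) := fun x =>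
    LinearMap.pi fun b => if orb b = x then LinearMap.proj b else 0
  have hr : ∀ x f b, r x f b = if orb b = x then f b else 0 := by
    intro x f b
    simp only [r, LinearMap.pi_apply]
    split_ifs <;> rfl
  have hrot : ∀ x f b, rotationSum k p ι S (r x f) b =
      if orb b = x then rotationSum k p ι S f b else 0 := by
    intro x f b
    have : ∀ a : ZMod p, orb (a +ᵥ b) = orb b := fun a => AddAction.orbit_vadd a b
    simp only [rotationSum_apply, hr, this]
    split_ifs <;> simp
  have hrK : ∀ x, rotationKernel k p ι S ≤ (rotationKernel k p ι S).comap (r x) := by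
    intro x f hf b hb
    rw [hrot, hf b hb, ite_self]
  have : Fintype (Set (ι → Cell p)) := Fintype.ofFinite _
  have : FiniteDimensional k ((ι → Cell p) → S) := inferInstance
  refine BuiltFrom.of_partition ⟨⊥, bot_ne_top⟩ (X := Set (ι → Cell p))
    (fun x => Submodule.mapQ _ _ (r x) (hrK x)) ?_ ?_ ?_
  · intro g x v
    obtain ⟨f, rfl⟩ := Submodule.Quotient.mk_surjective _ v
    simp only [Submodule.mapQ_apply, rotationQuotient_mk]
    congr 1
    funext b
    obtain ⟨b, rfl⟩ : ∃ b', b = g • b' := ⟨g⁻¹ • b, by simp⟩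
    rw [funRep_apply_smul, hr, hr, ← horb, funRep_apply_smul]
    simp only [smul_left_cancel_iff]
    split_ifs <;> simp
  · intro v
    obtain ⟨f, rfl⟩ := Submodule.Quotient.mk_surjective _ v
    simp only [Submodule.mapQ_apply]
    change ∑ x, (rotationKernel k p ι S).mkQ (r x f) = (rotationKernel k p ι S).mkQ f
    rw [← map_sum]
    congr 1
    funext b
    simp [Finset.sum_apply, hr]
  · intro x hx htop
    refine hx (LinearMap.ext fun v => ?_)
    obtain ⟨f, rfl⟩ := Submodule.Quotient.mk_surjective _ v
    rw [Submodule.mapQ_apply, LinearMap.zero_apply, Submodule.Quotient.mk_eq_zero]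
    intro b hb
    rw [hrot, if_neg]
    rintro rfl
    refine hb (Finset.sum_eq_zero fun c _ => ?_)
    rw [Cell.deg_eq_zero]
    refine eq_empty_of_smul_mem_orbit hact hz hκz hker (fun g => ?_) c
    have hg : g ∈ MulAction.stabilizer G (orb b) := htop ▸ Subgroup.mem_top g
    rw [MulAction.mem_stabilizer_iff, horb] at hg
    have : g • b ∈ orb b := hg ▸ AddAction.mem_orbit_self (g • b)
    obtain ⟨a, ha⟩ := this
    exact ⟨a, ha.symm⟩

/-- A representation with a family of anticommuting involutions permuted transitively by `G` is
built from proper subgroups, provided there is a cocycle with values in `ℤ/p` on the index set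
which is nonzero on an element killed by all homomorphisms to `ℤ/p`. -/
theorem builtFrom_ne_top_of_anticommuting [Finite G] [Nontrivial G]
    [MulAction.IsPretransitive G ι] [FiniteDimensional k S] [CharP k p]
    (hact : ∀ g (b : ι → Cell p) c, (g • b) (g • c) = κ g c +ᵥ b c)
    {z : G} {c₀ : ι} (hz : z • c₀ = c₀) (hκz : κ z c₀ ≠ 0)
    (hker : ∀ ψ : G →* Multiplicative (ZMod p), ψ z = 1) (σ : Representation k G S)
    {γ : ι → S →ₗ[k] S} (hanti : ∀ c c', c ≠ c' → ∀ s, γ c (γ c' s) = -γ c' (γ c s))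
    (hsq : ∀ c s, γ c (γ c s) = s) (hσγ : ∀ g c s, σ g (γ c s) = γ (g • c) (σ g s)) :
    BuiltFrom (· ≠ ⊤) σ := by
  classical
  have hd := funRep_cellDiff hact hσγ
  have hdd := cellDiff_cellDiff hanti (Cell.boundary_mul_boundary (k := k) (p := p))
  have hcard : 0 < Fintype.card ι := Fintype.card_pos_iff.2 ⟨c₀⟩
  have hempty : ∀ b : ι → Cell p, ∑ c, (b c).deg = 0 → b = fun _ => .empty := by
    intro b hb
    funext c
    rw [← Cell.deg_eq_zero]
    exact (Finset.sum_eq_zero_iff.1 hb) c (Finset.mem_univ c)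
  have hexact : ∀ i, i < 2 * Fintype.card ι → ∀ f ∈ degreePart k S Cell.deg i,
      cellDiff γ (Cell.boundary k p) f = 0 → ∃ f' ∈ degreePart k S Cell.deg (i + 1),
        cellDiff γ (Cell.boundary k p) f' = f := fun i hi f hf hdf =>
    exists_cellDiff_eq hanti hsq Cell.boundary_mul_boundary Cell.boundary_homotopy
      Cell.deg_of_homotopy_ne_zero Cell.deg_of_fundamental_ne_zero hi.ne hf hdf
  let ev : ((ι → Cell p) → S) →ₗ[k] S := LinearMap.proj fun _ => .empty
  refine BuiltFrom.of_resolution (θ := funRep _ σ) (η := rotationQuotient hact σ)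
    (d := cellDiff γ (Cell.boundary k p)) (q := (rotationKernel k p ι S).mkQ)
    (D := Submodule.mapQ _ _ (cellDiff γ (Cell.boundary k p))
      fun f hf => cellDiff_mem_rotationKernel γ hf)
    (ε := Submodule.liftQ _ (ev ∘ₗ cellDiff γ (Cell.boundary k p))
      fun f hf => cellDiff_apply_empty γ hf)
    (Fi := degreePart k S Cell.deg) (m := 2 * Fintype.card ι)
    ⟨⊥, bot_ne_top⟩ ?_ (builtFrom_rotationQuotient hact hz hκz hker σ) hd (fun _ _ => rfl)
    ?_ ?_ ?_ (fun _ => rfl) ?_ ?_ (by omega) (fun i _ hi => hexact i hi) ?_ ?_ ?_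
  · intro E hE y htop
    refine hE (Subgroup.eq_top_iff' _ |>.2 fun g => ?_)
    have hfix : ∀ g : G, g • y = y := fun g => by
      rw [← MulAction.mem_stabilizer_iff, htop]; trivial
    have hall : ∀ y' : G ⧸ E, y' = y := fun y' => by
      obtain ⟨g, rfl⟩ := MulAction.exists_smul_eq G y y'
      exact hfix g
    have h1 : ((1 : G) : G ⧸ E) = g := (hall _).trans (hall _).symm
    rw [QuotientGroup.eq] at h1
    simpa using h1
  · intro g v
    obtain ⟨f, rfl⟩ := Submodule.Quotient.mk_surjective _ v
    simp only [Submodule.mapQ_apply, rotationQuotient_mk, hd g f]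
  · intro g v
    obtain ⟨f, rfl⟩ := Submodule.Quotient.mk_surjective _ v
    rw [rotationQuotient_mk]
    change cellDiff γ (Cell.boundary k p) (funRep _ σ g f) (fun _ => .empty) =
      σ g (cellDiff γ (Cell.boundary k p) f (fun _ => .empty))
    have h0 : (g⁻¹ • fun _ => .empty : ι → Cell p) = fun _ => .empty :=
      hempty _ (by rw [sum_deg_smul hact]; simp [Cell.deg])
    rw [hd g f, funRep_apply, h0]
  · intro i g f hf b hb
    rw [funRep_apply, hf _ (by rwa [sum_deg_smul hact]), map_zero]
  · intro v
    obtain ⟨f, rfl⟩ := Submodule.Quotient.mk_surjective _ v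
    simp only [Submodule.mapQ_apply, hdd f, Submodule.Quotient.mk_zero]
  · intro v
    obtain ⟨f, rfl⟩ := Submodule.Quotient.mk_surjective _ v
    exact congrFun (hdd f) _
  · intro f hf h0
    refine hexact 1 (by omega) f hf (funext fun b => ?_)
    by_cases hb : ∑ c, (b c).deg = 0
    · rw [hempty b hb]
      exact h0
    · exact cellDiff_mem_degreePart Cell.deg_of_boundary_ne_zero γ hf b hb
  · intro s
    have hs : Pi.single (fun _ => .empty) s ∈ degreePart (ι := ι) k S (Cell.deg (p := p)) 0 := by
      intro b hb
      rw [Pi.single_eq_of_ne]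
      rintro rfl
      simp [Cell.deg] at hb
    obtain ⟨f, hf, hfs⟩ := hexact 0 (by omega) _ hs
      (cellDiff_eq_zero_of_degree_zero Cell.deg_of_boundary_ne_zero γ hs)
    refine ⟨f, hf, ?_⟩
    change cellDiff γ (Cell.boundary k p) f (fun _ => .empty) = s
    rw [hfs, Pi.single_eq_same]
  · intro f hf hdf
    rw [Submodule.mkQ_apply, Submodule.Quotient.mk_eq_zero]
    intro b _
    simp [rotationSum_apply, apply_vadd_eq_of_cellDiff_eq_zero hanti hsq Cell.boundary_homotopy
      Cell.deg_of_homotopy_ne_zero Cell.deg_le Cell.fundamental_vadd hf hdf, ZMod.card,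
      ← Nat.cast_smul_eq_nsmul k]

end Sphere

end Representation

namespace ExteriorAlgebra

variable {M N : Type} [AddCommGroup M] [Module k M] [AddCommGroup N] [Module k N]

lemma contractLeft_map (f : M →ₗ[k] N) (d : Module.Dual k N) (x : ExteriorAlgebra k M) :
    CliffordAlgebra.contractLeft d (map f x) =
      map f (CliffordAlgebra.contractLeft (d ∘ₗ f) x) := by
  induction x using CliffordAlgebra.left_induction with
  | algebraMap r => simp [CliffordAlgebra.contractLeft_algebraMap]
  | add x y hx hy => simp [hx, hy]
  | ι_mul x m hx =>
    have h1 : map f (CliffordAlgebra.ι 0 m * x) = CliffordAlgebra.ι 0 (f m) * map f x :=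
      (map_mul (map f) _ _).trans (congrArg (· * _) (map_apply_ι f m))
    have h2 : map f (CliffordAlgebra.ι 0 m * CliffordAlgebra.contractLeft (d ∘ₗ f) x) =
        CliffordAlgebra.ι 0 (f m) * map f (CliffordAlgebra.contractLeft (d ∘ₗ f) x) :=
      (map_mul (map f) _ _).trans (congrArg (· * _) (map_apply_ι f m))
    rw [h1, CliffordAlgebra.contractLeft_ι_mul, CliffordAlgebra.contractLeft_ι_mul, map_sub, h2,
      hx, map_smul]
    rfl

lemma algebraMapInv_map (f : M →ₗ[k] N) (x : ExteriorAlgebra k M) :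
    algebraMapInv (map f x) = algebraMapInv x := by
  have : (algebraMapInv : ExteriorAlgebra k N →ₐ[k] k).comp (map f) = algebraMapInv := by
    ext m
    simp [algebraMapInv]
  exact DFunLike.congr_fun this x

variable {ι : Type} [DecidableEq ι]

/-- The Clifford multiplication by a standard basis vector on the exterior algebra. -/
noncomputable def cliffordOp (k : Type) [Field k] {ι : Type} [DecidableEq ι] (c : ι) :
    ExteriorAlgebra k (ι → k) →ₗ[k] ExteriorAlgebra k (ι → k) :=
  LinearMap.mulLeft k (ExteriorAlgebra.ι k (Pi.single c 1)) +
    CliffordAlgebra.contractLeft (LinearMap.proj c)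

lemma cliffordOp_apply (c : ι) (x : ExteriorAlgebra k (ι → k)) :
    cliffordOp k c x = ExteriorAlgebra.ι k (Pi.single c 1) * x +
      CliffordAlgebra.contractLeft (LinearMap.proj c) x := rfl

lemma contractLeft_proj_ι_mul (c c' : ι) (x : ExteriorAlgebra k (ι → k)) :
    CliffordAlgebra.contractLeft (LinearMap.proj c) (ExteriorAlgebra.ι k (Pi.single c' 1) * x) =
      (if c = c' then x else 0) -
        ExteriorAlgebra.ι k (Pi.single c' 1) *
          CliffordAlgebra.contractLeft (LinearMap.proj c) x := by
  have := CliffordAlgebra.contractLeft_ι_mul (Q := (0 : QuadraticForm k (ι → k)))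
    (d := LinearMap.proj c) (Pi.single c' 1) x
  refine this.trans ?_
  rw [LinearMap.proj_apply, Pi.single_apply, ite_smul, one_smul, zero_smul]

lemma cliffordOp_comp_self (c : ι) : cliffordOp k c ∘ₗ cliffordOp k c = LinearMap.id := by
  refine LinearMap.ext fun x => ?_
  simp only [LinearMap.comp_apply, cliffordOp_apply, map_add, contractLeft_proj_ι_mul,
    ← mul_assoc, ι_sq_zero, zero_mul, CliffordAlgebra.contractLeft_contractLeft, if_true]
  simp

lemma cliffordOp_anticomm {c c' : ι} (hc : c ≠ c') (x : ExteriorAlgebra k (ι → k)) :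
    cliffordOp k c (cliffordOp k c' x) = -cliffordOp k c' (cliffordOp k c x) := by
  have h1 : ExteriorAlgebra.ι k (Pi.single c 1 : ι → k) *
      ExteriorAlgebra.ι k (Pi.single c' 1 : ι → k) =
      -(ExteriorAlgebra.ι k (Pi.single c' 1 : ι → k) *
        ExteriorAlgebra.ι k (Pi.single c 1 : ι → k)) :=
    eq_neg_of_add_eq_zero_left (ι_add_mul_swap _ _)
  have h2 : CliffordAlgebra.contractLeft (LinearMap.proj c)
      (CliffordAlgebra.contractLeft (LinearMap.proj c') x) =
      -CliffordAlgebra.contractLeft (LinearMap.proj c')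
        (CliffordAlgebra.contractLeft (LinearMap.proj c) x) :=
    CliffordAlgebra.contractLeft_comm _ _ x
  rw [cliffordOp_apply,
    cliffordOp_apply c', cliffordOp_apply c', cliffordOp_apply c, map_add, map_add,
    contractLeft_proj_ι_mul, contractLeft_proj_ι_mul, if_neg hc, if_neg hc.symm, h2, mul_add,
    mul_add, ← mul_assoc, ← mul_assoc, h1, neg_mul]
  have (A : Type) [AddCommGroup A] (s t u v : A) :
      -s + t + (0 - u + -v) = -(s + u + (0 - t + v)) := by
    abel
  exact this _ _ _ _ _

end ExteriorAlgebra

namespace Representation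

section Exterior

variable {V ι : Type} [AddCommGroup V] [Module k V] [MulAction G ι]

/-- The exterior algebra of a permutation representation. -/
noncomputable def exteriorRep (k : Type) [Field k] {G : Type} [Group G] (ι : Type)
    [MulAction G ι] : Representation k G (ExteriorAlgebra k (ι → k)) where
  toFun g := (ExteriorAlgebra.map (funRep ι (1 : Representation k G k) g)).toLinearMap
  map_one' := by
    rw [map_one]
    exact congrArg AlgHom.toLinearMap ExteriorAlgebra.map_id
  map_mul' g h := by
    rw [map_mul]
    exact congrArg AlgHom.toLinearMap (ExteriorAlgebra.map_comp_map _ _).symm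

lemma exteriorRep_apply (g : G) (x : ExteriorAlgebra k (ι → k)) :
    exteriorRep k ι g x = ExteriorAlgebra.map (funRep ι (1 : Representation k G k) g) x := rfl

lemma exteriorRep_cliffordOp [DecidableEq ι] (g : G) (c : ι) (x : ExteriorAlgebra k (ι → k)) :
    exteriorRep k ι g (ExteriorAlgebra.cliffordOp k c x) =
      ExteriorAlgebra.cliffordOp k (g • c) (exteriorRep k ι g x) := by
  have h1 : funRep ι (1 : Representation k G k) g (Pi.single c 1) = Pi.single (g • c) 1 := by
    funext c'
    obtain ⟨c', rfl⟩ : ∃ c'', c' = g • c'' := ⟨g⁻¹ • c', by simp⟩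
    rw [funRep_apply_smul]
    simp [Pi.single_apply]
  have h2 : (LinearMap.proj (g • c) ∘ₗ funRep ι (1 : Representation k G k) g) =
      (LinearMap.proj c : (ι → k) →ₗ[k] k) := by
    refine LinearMap.ext fun w => ?_
    rw [LinearMap.comp_apply, LinearMap.proj_apply, funRep_apply_smul]
    simp
  simp only [exteriorRep_apply, ExteriorAlgebra.cliffordOp_apply, map_add, map_mul,
    ExteriorAlgebra.map_apply_ι, h1, ExteriorAlgebra.contractLeft_map, h2]

instance finiteDimensional_exteriorAlgebra [Finite ι] :
    FiniteDimensional k (ExteriorAlgebra k (ι → k)) := by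
  have := Fintype.ofFinite ι
  classical
  let : LinearOrder ι := linearOrderOfSTO WellOrderingRel
  exact Module.Finite.of_basis (Pi.basisFun k ι).ExteriorAlgebra

/-- Every finite-dimensional representation of `G` is built from proper subgroups, provided there
is a cocycle with values in `ℤ/p` on a transitive `G`-set which is nonzero on an element killed by
all homomorphisms to `ℤ/p`. -/
theorem builtFrom_ne_top_of_cocycle [Finite G] [Nontrivial G] {p : ℕ} [Fact p.Prime] [CharP k p]
    [Fintype ι] [DecidableEq ι] [MulAction.IsPretransitive G ι] [FiniteDimensional k V]
    {κ : G → ι → ZMod p}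
    (hκ : ∀ g h c, κ (g * h) c = κ g (h • c) + κ h c)
    {z : G} {c₀ : ι} (hz : z • c₀ = c₀) (hκz : κ z c₀ ≠ 0)
    (hker : ∀ ψ : G →* Multiplicative (ZMod p), ψ z = 1) (τ : Representation k G V) :
    BuiltFrom (· ≠ ⊤) τ := by
  have hκ1 : ∀ c, κ 1 c = 0 := fun c => by simpa using hκ 1 1 c
  let : MulAction G (ι → Cell p) :=
    { smul g b c := κ g (g⁻¹ • c) +ᵥ b (g⁻¹ • c)
      one_smul b := by
        funext c
        change κ 1 ((1 : G)⁻¹ • c) +ᵥ b ((1 : G)⁻¹ • c) = b c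
        simp [hκ1]
      mul_smul g h b := by
        funext c
        change κ (g * h) ((g * h)⁻¹ • c) +ᵥ b ((g * h)⁻¹ • c) =
          κ g (g⁻¹ • c) +ᵥ (κ h (h⁻¹ • g⁻¹ • c) +ᵥ b (h⁻¹ • g⁻¹ • c))
        simp [hκ, mul_smul, vadd_vadd] }
  have hact : ∀ g (b : ι → Cell p) c, (g • b) (g • c) = κ g c +ᵥ b c := by
    intro g b c
    change κ g (g⁻¹ • g • c) +ᵥ b (g⁻¹ • g • c) = _
    rw [inv_smul_smul]
  have hS : BuiltFrom (· ≠ ⊤) ((exteriorRep k ι).tprod τ) := by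
    refine builtFrom_ne_top_of_anticommuting hact hz hκz hker _
      (γ := fun c => (ExteriorAlgebra.cliffordOp k c).rTensor V) ?_ ?_ ?_
    · intro c c' hc s
      induction s using TensorProduct.induction_on with
      | zero => simp
      | tmul x v =>
        rw [LinearMap.rTensor_tmul, LinearMap.rTensor_tmul, LinearMap.rTensor_tmul,
          LinearMap.rTensor_tmul, ExteriorAlgebra.cliffordOp_anticomm hc,
          _root_.TensorProduct.neg_tmul]
      | add s t hs ht => simp only [map_add, hs, ht, neg_add]
    · intro c s
      have := congrArg (LinearMap.rTensor V) (ExteriorAlgebra.cliffordOp_comp_self (k := k) c)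
      rw [LinearMap.rTensor_comp, LinearMap.rTensor_id] at this
      exact LinearMap.congr_fun this s
    · intro g c s
      induction s using TensorProduct.induction_on with
      | zero => simp
      | tmul x v => simp [exteriorRep_cliffordOp]
      | add s t hs ht => simp only [map_add, hs, ht]
  refine BuiltFrom.retract (τ := (exteriorRep k ι).tprod τ) (_root_.TensorProduct.mk k _ V 1)
    ((_root_.TensorProduct.lid k V).toLinearMap ∘ₗ
      ExteriorAlgebra.algebraMapInv.toLinearMap.rTensor V)
    (fun g v => ?_) (fun g s => ?_) (fun v => ?_) hS
  · simp [exteriorRep_apply]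
  · induction s using TensorProduct.induction_on with
    | zero => simp
    | tmul x v => simp [exteriorRep_apply, ExteriorAlgebra.algebraMapInv_map]
    | add s t hs ht => simp only [map_add, hs, ht]
  · simp

end Exterior

end Representation

section ElementaryAbelian

variable {p : ℕ}

lemma IsElementaryAbelian.of_conj_subgroup {H : Subgroup G} {K : Subgroup H}
    (hK : IsElementaryAbelian p K) {L : Subgroup G} {g : G}
    (h : ∀ l ∈ L, ∃ x ∈ K, (x : G) = g⁻¹ * l * g) : IsElementaryAbelian p L := by
  refine ⟨fun l hl => ?_, fun l hl m hm => ?_⟩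
  · obtain ⟨x, hx, hxl⟩ := h l hl
    have hx' : (x : G) ^ p = 1 := by exact_mod_cast congrArg Subtype.val (hK.1 x hx)
    have : l = g * x * g⁻¹ := by rw [hxl]; group
    rw [this, conj_pow, hx', mul_one, mul_inv_cancel]
  · obtain ⟨x, hx, hxl⟩ := h l hl
    obtain ⟨y, hy, hym⟩ := h m hm
    have hxy : (x * y : G) = y * x := congrArg Subtype.val (hK.2 x hx y hy)
    have hl' : l = g * x * g⁻¹ := by rw [hxl]; group
    have hm' : m = g * y * g⁻¹ := by rw [hym]; group
    calc l * m = g * (x * y) * g⁻¹ := by rw [hl', hm']; group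
      _ = m * l := by rw [hxy, hl', hm']; group

lemma isElementaryAbelian_bot : IsElementaryAbelian p (⊥ : Subgroup G) := by
  refine ⟨fun x hx => ?_, fun x hx y hy => ?_⟩
  · rw [Subgroup.mem_bot.mp hx, one_pow]
  · rw [Subgroup.mem_bot.mp hx, one_mul, mul_one]

lemma exists_ne_one_of_not_isElementaryAbelian_top
    (h : ¬ IsElementaryAbelian p (⊤ : Subgroup G)) :
    ∃ w : G, w ≠ 1 ∧ ∀ ψ : G →* Multiplicative (ZMod p), ψ w = 1 := by
  by_contra! hw
  refine h ⟨fun x _ => ?_, fun x _ y _ => ?_⟩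
  · by_contra hx
    obtain ⟨ψ, hψ⟩ := hw _ hx
    refine hψ (Multiplicative.toAdd.injective ?_)
    rw [map_pow, toAdd_pow, toAdd_one]
    simp
  · by_contra hxy
    obtain ⟨ψ, hψ⟩ := hw (x * y * (y * x)⁻¹) (mt mul_inv_eq_one.mp hxy)
    refine hψ ?_
    rw [map_mul, map_inv, map_mul, map_mul, mul_comm (ψ y), mul_inv_cancel]

end ElementaryAbelian

namespace Representation

lemma BuiltFrom.trans {S T : Subgroup G → Prop} {V : Type} [AddCommGroup V] [Module k V]
    {ρ : Representation k G V} (h : BuiltFrom S ρ)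
    (hST : ∀ E, S E → ∀ (W : Type) [AddCommGroup W] [Module k W] [FiniteDimensional k W]
      (σ : Representation k E W), BuiltFrom T (indRep σ)) : BuiltFrom T ρ := by
  induction h with
  | ind E hE σ => exact hST E hE _ σ
  | ext f g hf hg hinj hex hsurj hU hW ihU ihW => exact ext f g hf hg hinj hex hsurj ihU ihW
  | retract i r hi hr hri hU ih => exact retract i r hi hr hri ih

section PGroup

variable {p : ℕ} [Fact p.Prime] [CharP k p]

/-- If a finite `p`-group is not elementary abelian, its finite-dimensional representations in
characteristic `p` are built from its proper subgroups. -/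
theorem builtFrom_ne_top_of_isPGroup [Finite G] (hG : IsPGroup p G)
    (h : ¬ IsElementaryAbelian p (⊤ : Subgroup G)) {V : Type} [AddCommGroup V] [Module k V]
    [FiniteDimensional k V] (τ : Representation k G V) : BuiltFrom (· ≠ ⊤) τ := by
  classical
  obtain ⟨w, hw1, hw⟩ := exists_ne_one_of_not_isElementaryAbelian_top h
  have : Nontrivial G := ⟨w, 1, hw1⟩
  have hw' : (⟨w, Subgroup.mem_zpowers w⟩ : Subgroup.zpowers w) ≠ 1 :=
    fun h => hw1 (congrArg Subtype.val h)
  obtain ⟨⟨z, hzw⟩, hz⟩ := exists_prime_orderOf_dvd_card' (G := Subgroup.zpowers w) p (by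
    obtain ⟨n, hn⟩ := (IsPGroup.iff_card (p := p)).mp (hG.to_subgroup (Subgroup.zpowers w))
    rw [hn]
    refine dvd_pow_self p fun h0 => hw' ?_
    rw [h0, pow_zero] at hn
    have := (Nat.card_eq_one_iff_unique.mp hn).1
    exact Subsingleton.elim _ _)
  replace hz : orderOf z = p := by rw [← hz, Subgroup.orderOf_mk]
  have hz1 : z ≠ 1 := fun h => (Fact.out : p.Prime).one_lt.ne' (by rw [← hz, h, orderOf_one])
  obtain ⟨n, rfl⟩ := Subgroup.mem_zpowers_iff.mp hzw
  set z := w ^ n with hzdef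
  let e : Subgroup.zpowers z ≃* Multiplicative (ZMod p) :=
    mulEquivOfCyclicCardEq (by
      rw [Nat.card_zpowers, hz, Nat.card_congr Multiplicative.toAdd, Nat.card_zmod])
  have : Fintype (G ⧸ Subgroup.zpowers z) := Fintype.ofFinite _
  have hfix : z • ((1 : G) : G ⧸ Subgroup.zpowers z) = ((1 : G) : G ⧸ Subgroup.zpowers z) := by
    rw [MulAction.Quotient.smul_coe, QuotientGroup.eq]
    simp
  refine builtFrom_ne_top_of_cocycle (p := p) (ι := G ⧸ Subgroup.zpowers z)
    (κ := fun g c => Multiplicative.toAdd (e (cosetCocycle _ g c)))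
    (fun g h c => by rw [cosetCocycle_mul, map_mul, toAdd_mul]) hfix ?_
    (fun ψ => by rw [hzdef, map_zpow, hw, one_zpow]) τ
  rw [ne_eq, toAdd_eq_zero, EmbeddingLike.map_eq_one_iff]
  intro h
  have := congrArg Subtype.val h
  rw [coe_cosetCocycle, hfix, Subgroup.coe_one, inv_mul_eq_one, right_eq_mul] at this
  exact hz1 this

/-- Every finite-dimensional representation of a finite `p`-group in characteristic `p` is built
from elementary abelian subgroups. -/
theorem builtFrom_isElementaryAbelian_of_isPGroup [Finite G] (hG : IsPGroup p G) {V : Type}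
    [AddCommGroup V] [Module k V] [FiniteDimensional k V] (τ : Representation k G V) :
    BuiltFrom (IsElementaryAbelian p) τ := by
  induction hn : Nat.card G using Nat.strong_induction_on generalizing G V with
  | _ n ih =>
    by_cases h : IsElementaryAbelian p (⊤ : Subgroup G)
    · let : MulAction G PUnit :=
        { smul _ _ := PUnit.unit, one_smul _ := rfl, mul_smul _ _ _ := rfl }
      refine BuiltFrom.of_partition ⟨⊤, h⟩ (X := PUnit) (fun _ => LinearMap.id)
        (fun _ _ _ => rfl) (fun v => by simp) fun x _ => ?_
      have : MulAction.stabilizer G x = ⊤ := by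
        ext g
        simp [MulAction.mem_stabilizer_iff]
      rwa [this]
    · refine (builtFrom_ne_top_of_isPGroup hG h τ).trans fun E hE W _ _ _ σ => ?_
      refine BuiltFrom.indRep_of_subgroup ⟨⊥, isElementaryAbelian_bot⟩
        (fun K hK L g hL => hK.of_conj_subgroup hL) (ih _ ?_ (hG.to_subgroup E) σ rfl)
      rw [← hn]
      exact lt_of_le_of_ne (Subgroup.card_le_card_group E)
        fun hc => hE (Subgroup.eq_top_of_card_eq E hc)

/-- The trivial representation of a finite group in characteristic `p` is built from elementary
abelian `p`-subgroups. -/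
theorem builtFrom_isElementaryAbelian_one [Finite G] :
    BuiltFrom (IsElementaryAbelian p) (1 : Representation k G k) := by
  let P : Sylow p G := default
  have := Fintype.ofFinite (G ⧸ (P : Subgroup G))
  have hindex : (Fintype.card (G ⧸ (P : Subgroup G)) : k) ≠ 0 := by
    rw [ne_eq, CharP.cast_eq_zero_iff k p, ← Nat.card_eq_fintype_card]
    exact P.not_dvd_index
  refine BuiltFrom.retract (τ := indRep (1 : Representation k P k))
    (LinearMap.pi fun _ => LinearMap.id)
    ((Fintype.card (G ⧸ (P : Subgroup G)) : k)⁻¹ • ∑ c, LinearMap.proj c) (fun g v => ?_)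
    (fun g f => ?_) (fun v => ?_)
    (BuiltFrom.indRep_of_subgroup ⟨⊥, isElementaryAbelian_bot⟩
      (fun K hK L g hL => hK.of_conj_subgroup hL)
      (builtFrom_isElementaryAbelian_of_isPGroup P.isPGroup' _))
  · funext c
    simp [indRep_apply]
  · simp only [LinearMap.smul_apply, LinearMap.sum_apply, LinearMap.proj_apply,
      MonoidHom.one_apply, Module.End.one_apply]
    congr 1
    rw [← Equiv.sum_comp (MulAction.toPerm g)]
    simp [indRep_apply_smul]
  · simp [hindex]

end PGroup

end Representation

namespace Representation

section InducedFrom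

open Classical in
lemma map_indRep_range_single {E : Subgroup G} {W : Type} [AddCommGroup W] [Module k W]
    (σ : Representation k E W) (g : G) (c : G ⧸ E) :
    (LinearMap.range (LinearMap.single k (fun _ => W) c)).map (indRep σ g) =
      LinearMap.range (LinearMap.single k (fun _ => W) (g • c)) := by
  have h : ∀ w, indRep σ g (Pi.single c w) = Pi.single (g • c) (σ (cosetCocycle E g c) w) := by
    intro w
    funext c'
    obtain ⟨c', rfl⟩ : ∃ c'', c' = g • c'' := ⟨g⁻¹ • c', by simp⟩
    rw [indRep_apply_smul]
    by_cases hc : c' = c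
    · subst hc
      simp
    · simp [hc]
  ext f
  constructor
  · rintro ⟨_, ⟨w, rfl⟩, rfl⟩
    exact ⟨_, (h w).symm⟩
  · rintro ⟨w, rfl⟩
    refine ⟨_, ⟨σ (cosetCocycle E g c)⁻¹ w, rfl⟩, ?_⟩
    rw [LinearMap.coe_single, h, self_inv_apply]
    rfl

lemma isInducedFrom_indRep [Finite G] {E : Subgroup G} {W : Type} [AddCommGroup W] [Module k W]
    (σ : Representation k E W) : IsInducedFrom (indRep σ) E := by
  classical
  have hout : ∀ c : G ⧸ E,
      (LinearMap.range (LinearMap.single k (fun _ => W) ((1 : G) : G ⧸ E))).map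
        (indRep σ c.out) = LinearMap.range (LinearMap.single k (fun _ => W) c) := by
    intro c
    rw [map_indRep_range_single, MulAction.Quotient.smul_coe, smul_eq_mul, mul_one,
      QuotientGroup.out_eq']
  refine ⟨LinearMap.range (LinearMap.single k (fun _ => W) ((1 : G) : G ⧸ E)), fun e he => ?_,
    ?_, ?_⟩
  · rw [map_indRep_range_single]
    congr 3
    rw [MulAction.Quotient.smul_coe, QuotientGroup.eq]
    simpa using he
  · simp only [hout]
    intro c
    rw [Submodule.disjoint_def]
    rintro _ ⟨w, rfl⟩ hw
    have hle : (⨆ c', ⨆ (_ : c' ≠ c), LinearMap.range (LinearMap.single k (fun _ => W) c')) ≤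
        LinearMap.ker (LinearMap.proj c : (G ⧸ E → W) →ₗ[k] W) := by
      refine iSup₂_le fun c' hc => ?_
      rintro _ ⟨w', rfl⟩
      simp [hc.symm]
    have : w = 0 := by simpa using hle hw
    simp [this]
  · simp only [hout]
    exact LinearMap.iSup_range_single k fun _ => W

end InducedFrom

/-- The class of representations with a finite filtration whose subquotients are finite-dimensional
representations induced from the subgroups satisfying `S`. -/
inductive InducedFiltered (S : Subgroup G → Prop) :
    ∀ {V : Type} [AddCommGroup V] [Module k V], Representation k G V → Prop
  | zero {V : Type} [AddCommGroup V] [Module k V] [Subsingleton V] (ρ : Representation k G V) :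
      InducedFiltered S ρ
  | step {U V Q : Type} [AddCommGroup U] [Module k U] [AddCommGroup V] [Module k V]
      [AddCommGroup Q] [Module k Q] [FiniteDimensional k Q]
      {τ : Representation k G U} {ρ : Representation k G V} {σ : Representation k G Q}
      (f : U →ₗ[k] V) (g : V →ₗ[k] Q) (hf : IsEquivariant τ ρ f) (hg : IsEquivariant ρ σ g)
      (hinj : Function.Injective f) (hex : Function.Exact f g) (hsurj : Function.Surjective g)
      (E : Subgroup G) (hE : S E) (hσ : IsInducedFrom σ E) (hU : InducedFiltered S τ) :
      InducedFiltered S ρ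

/-- The subquotient `B / A` of a representation is finite-dimensional and induced from a subgroup
satisfying `S`. -/
def IsInducedStep (S : Subgroup G → Prop) {V : Type} [AddCommGroup V] [Module k V]
    (ρ : Representation k G V) (A B : Submodule k V) : Prop :=
  ∃ E : Subgroup G, S E ∧ ∃ (Q : Type) (_ : AddCommGroup Q) (_ : Module k Q)
    (σ : Representation k G Q), FiniteDimensional k Q ∧ IsInducedFrom σ E ∧
      ∃ φ : B →ₗ[k] Q, Function.Surjective φ ∧ LinearMap.ker φ = A.comap B.subtype ∧
        ∀ (g : G) (x y : B), (y : V) = ρ g x → φ y = σ g (φ x)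

section Filtered

variable {S : Subgroup G → Prop}
variable {U V W : Type} [AddCommGroup U] [Module k U] [AddCommGroup V] [Module k V]
  [AddCommGroup W] [Module k W]
  {τ : Representation k G U} {ρ : Representation k G V} {σ : Representation k G W}

lemma IsInducedStep.map {A B : Submodule k U} (h : IsInducedStep S τ A B) {f : U →ₗ[k] V}
    (hf : IsEquivariant τ ρ f) (hinj : Function.Injective f) :
    IsInducedStep S ρ (A.map f) (B.map f) := by
  obtain ⟨E, hE, Q, _, _, σ, hQ, hσ, φ, hφ, hker, hequiv⟩ := h
  let e := B.equivMapOfInjective f hinj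
  have he : ∀ b, (e b : V) = f b := fun b => rfl
  refine ⟨E, hE, Q, _, _, σ, hQ, hσ, φ ∘ₗ e.symm.toLinearMap, hφ.comp e.symm.surjective, ?_, ?_⟩
  · ext x
    obtain ⟨b, rfl⟩ := e.surjective x
    have := SetLike.ext_iff.mp hker b
    rw [LinearMap.mem_ker, Submodule.mem_comap] at this ⊢
    rw [LinearMap.comp_apply, LinearEquiv.coe_coe, e.symm_apply_apply, this,
      Submodule.subtype_apply, Submodule.subtype_apply, he]
    exact (hinj.mem_set_image (s := (A : Set U))).symm
  · intro g x y hxy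
    obtain ⟨b, rfl⟩ := e.surjective x
    obtain ⟨b', rfl⟩ := e.surjective y
    rw [he, he, ← hf, hinj.eq_iff] at hxy
    simpa using hequiv g b b' hxy

namespace InducedFiltered

lemma finiteDimensional (h : InducedFiltered S ρ) : FiniteDimensional k V := by
  induction h with
  | zero ρ => infer_instance
  | step f g hf hg hinj hex hsurj E hE hσ hU ih =>
    have : FiniteDimensional k (LinearMap.ker g) := by
      rw [LinearMap.exact_iff.mp hex]; infer_instance
    have := Module.Finite.equiv g.quotKerEquivRange.symm
    exact Module.Finite.of_submodule_quotient (LinearMap.ker g)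

lemma of_bijective (h : InducedFiltered S τ) (e : U →ₗ[k] V) (he : IsEquivariant τ ρ e)
    (hbij : Function.Bijective e) : InducedFiltered S ρ := by
  let e' := LinearEquiv.ofBijective e hbij
  have hee' : ∀ v, e (e'.symm v) = v := e'.apply_symm_apply
  have he' : IsEquivariant ρ τ e'.symm.toLinearMap := fun g v => hbij.1 (by
    rw [he]
    simp only [LinearEquiv.coe_coe, hee'])
  cases h with
  | zero =>
    have := e'.symm.injective.subsingleton
    exact zero ρ
  | step f g hf hg hinj hex hsurj E hE hσ hU =>
    refine step (e ∘ₗ f) (g ∘ₗ e'.symm.toLinearMap) (he.comp hf) (hg.comp he')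
      (hbij.1.comp hinj) (fun v => ?_) (hsurj.comp e'.symm.surjective) E hE hσ hU
    obtain ⟨u, rfl⟩ := hbij.2 v
    have : e'.symm (e u) = u := e'.symm_apply_apply u
    simp only [LinearMap.comp_apply, LinearEquiv.coe_coe, this, hex u, Set.mem_range,
      hbij.1.eq_iff]

/-- The fibre product of two equivariant maps, as a representation. -/
noncomputable def fiberProduct {f : U →ₗ[k] W} {g : V →ₗ[k] W} (hf : IsEquivariant τ σ f)
    (hg : IsEquivariant ρ σ g) :
    Representation k G (LinearMap.eqLocus (f ∘ₗ LinearMap.fst k U V) (g ∘ₗ LinearMap.snd k U V)) :=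
  (τ.prod ρ).subrepresentation _ fun a x hx => by
    have hx : f x.1 = g x.2 := hx
    change f (τ a x.1) = g (ρ a x.2)
    rw [hf, hg, hx]

lemma ext (hU : InducedFiltered S τ) (hW : InducedFiltered S σ) {f : U →ₗ[k] V}
    {g : V →ₗ[k] W} (hf : IsEquivariant τ ρ f) (hg : IsEquivariant ρ σ g)
    (hinj : Function.Injective f) (hex : Function.Exact f g) (hsurj : Function.Surjective g) :
    InducedFiltered S ρ := by
  induction hW generalizing V with
  | zero σ => exact hU.of_bijective f hf ⟨hinj, fun v => (hex v).mp (Subsingleton.elim _ _)⟩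
  | @step W₀ W Q _ _ _ _ _ _ _ σ₀ σ κ j q hj hq hjinj hjex hqsurj E hE hκ hW₀ ih =>
    have hmem : ∀ x : LinearMap.eqLocus (g ∘ₗ LinearMap.fst k V W₀) (j ∘ₗ LinearMap.snd k V W₀),
      g x.1.1 = j x.1.2 := fun x => x.2
    have hpull : InducedFiltered S (fiberProduct hg hj) := by
      refine ih (f := (LinearMap.prod f 0).codRestrict _ fun u => ?_)
        (g := LinearMap.snd k V W₀ ∘ₗ Submodule.subtype _) ?_ ?_ ?_ ?_ ?_
      · change g (f u) = j 0
        rw [map_zero, hex.apply_apply_eq_zero]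
      · intro a u
        refine Subtype.ext (Prod.ext (hf a u) ?_)
        exact (map_zero (σ₀ a)).symm
      · intro a x
        rfl
      · intro u u' h
        exact hinj (congrArg (fun x => x.1.1) h)
      · rintro ⟨⟨v, w⟩, hx⟩
        constructor
        · rintro rfl
          have hv : g v = j 0 := hx
          rw [map_zero] at hv
          obtain ⟨u, rfl⟩ := (hex v).mp hv
          exact ⟨u, rfl⟩
        · rintro ⟨u, hu⟩
          exact (congrArg (fun x => x.1.2) hu).symm
      · intro w
        obtain ⟨v, hv⟩ := hsurj (j w)
        exact ⟨⟨(v, w), hv⟩, rfl⟩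
    refine step (LinearMap.fst k V W₀ ∘ₗ Submodule.subtype _) (q ∘ₗ g) (fun a x => rfl)
      (hq.comp hg) ?_ ?_ (hqsurj.comp hsurj) E hE hκ hpull
    · intro x y h
      have h : x.1.1 = y.1.1 := h
      exact Subtype.ext (Prod.ext h (hjinj (by rw [← hmem, ← hmem, h])))
    · intro v
      rw [LinearMap.comp_apply, hjex]
      constructor
      · rintro ⟨w, hw⟩
        exact ⟨⟨(v, w), hw.symm⟩, rfl⟩
      · rintro ⟨x, rfl⟩
        exact ⟨x.1.2, (hmem x).symm⟩

lemma exists_chain (h : InducedFiltered S ρ) :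
    ∃ (t : ℕ) (M : Fin (t + 1) → Submodule k V),
      (∀ i g x, x ∈ M i → ρ g x ∈ M i) ∧ M 0 = ⊥ ∧ M (Fin.last t) = ⊤ ∧
        (∀ i : Fin t, M i.castSucc ≤ M i.succ) ∧
          ∀ i : Fin t, IsInducedStep S ρ (M i.castSucc) (M i.succ) := by
  induction h with
  | zero ρ =>
    exact ⟨0, fun _ => ⊥, fun i g x hx => by rw [Submodule.mem_bot] at hx ⊢; rw [hx, map_zero],
      rfl, Subsingleton.elim _ _, fun i => i.elim0, fun i => i.elim0⟩
  | @step U V Q _ _ _ _ _ _ hQ τ ρ σ f g hf hg hinj hex hsurj E hE hσ hU ih =>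
    obtain ⟨t, M, hinv, h0, hlast, hmono, hstep⟩ := ih
    let N : Fin (t + 2) → Submodule k V :=
      Fin.snoc (α := fun _ => Submodule k V) (fun i => (M i).map f) ⊤
    have hN : ∀ i : Fin (t + 1), N i.castSucc = (M i).map f := fun i => by simp [N]
    have hN' : N (Fin.last (t + 1)) = ⊤ := by simp [N]
    refine ⟨t + 1, N, fun i => ?_, ?_, hN', fun i => ?_, fun i => ?_⟩
    · cases i using Fin.lastCases with
      | last => rw [hN']; exact fun _ _ _ => Submodule.mem_top
      | cast i =>
        rw [hN]
        rintro a _ ⟨u, hu, rfl⟩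
        exact ⟨τ a u, hinv i a u hu, hf a u⟩
    · rw [← Fin.castSucc_zero, hN, h0, Submodule.map_bot]
    · cases i using Fin.lastCases with
      | last => rw [Fin.succ_last, hN']; exact le_top
      | cast i => rw [hN, Fin.succ_castSucc, hN]; exact Submodule.map_mono (hmono i)
    · cases i using Fin.lastCases with
      | last =>
        rw [hN, Fin.succ_last, hN', hlast, Submodule.map_top]
        refine ⟨E, hE, Q, _, _, σ, hQ, hσ, g ∘ₗ Submodule.subtype ⊤,
          fun q => ?_, ?_, fun a x y hxy => ?_⟩
        · obtain ⟨v, rfl⟩ := hsurj q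
          exact ⟨⟨v, Submodule.mem_top⟩, rfl⟩
        · rw [LinearMap.ker_comp, LinearMap.exact_iff.mp hex]
        · rw [LinearMap.comp_apply, Submodule.subtype_apply, hxy, hg]
          rfl
      | cast i =>
        rw [hN, Fin.succ_castSucc, hN]
        exact (hstep i).map hf hinj

end InducedFiltered

lemma BuiltFrom.exists_inducedFiltered_prod [Finite G] (h : BuiltFrom S ρ) :
    ∃ (V' : Type) (_ : AddCommGroup V') (_ : Module k V') (ρ' : Representation k G V'),
      InducedFiltered S (ρ.prod ρ') := by
  induction h with
  | ind E hE σ =>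
    refine ⟨PUnit, _, inferInstance, 1, InducedFiltered.step
      (τ := (1 : Representation k G PUnit)) (σ := indRep σ) 0 (LinearMap.fst k _ _)
      (fun _ _ => by rw [LinearMap.zero_apply, map_zero]) (fun _ _ => rfl)
      (Function.injective_of_subsingleton _)
      (fun x => ?_) LinearMap.fst_surjective E hE (isInducedFrom_indRep σ) (.zero _)⟩
    constructor
    · intro hx
      exact ⟨0, Prod.ext hx.symm rfl⟩
    · rintro ⟨_, rfl⟩
      rfl
  | @ext A B C _ _ _ _ _ _ τ ρ σ f g hf hg hinj hex hsurj hU hW ihU ihW =>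
    obtain ⟨A', _, _, τ', hτ⟩ := ihU
    obtain ⟨C', _, _, σ', hσ⟩ := ihW
    refine ⟨A' × C', _, inferInstance, τ'.prod σ', hτ.ext hσ
      (f := f.prodMap (LinearMap.inl k A' C')) (g := g.prodMap (LinearMap.snd k A' C'))
      (fun a x => ?_) (fun a x => ?_) ?_ ?_ ?_⟩
    · simp [Representation.prod, hf a]
    · simp [Representation.prod, hg a]
    · exact Function.Injective.prodMap hinj LinearMap.inl_injective
    · rintro ⟨b, a', c'⟩
      simp only [LinearMap.prodMap_apply, LinearMap.snd_apply, Prod.mk_eq_zero, hex b,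
        Set.mem_range, Prod.exists, LinearMap.inl_apply, Prod.mk.injEq]
      constructor
      · rintro ⟨⟨u, rfl⟩, rfl⟩
        exact ⟨u, a', rfl, rfl, rfl⟩
      · rintro ⟨u, a', rfl, -, rfl⟩
        exact ⟨⟨u, rfl⟩, rfl⟩
    · exact Function.Surjective.prodMap hsurj (LinearMap.snd_surjective (R := k))
  | @retract U V _ _ _ _ τ ρ i r hi hr hri hU ih =>
    obtain ⟨U', _, _, τ', hτ⟩ := ih
    let κ : Representation k G (LinearMap.ker r) :=
      τ.subrepresentation _ fun g u hu => by
        rw [LinearMap.mem_ker] at hu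
        rw [Submodule.mem_comap, LinearMap.mem_ker, hr, hu, map_zero]
    let s : U →ₗ[k] LinearMap.ker r := (LinearMap.id - i ∘ₗ r).codRestrict _ fun u => by
      simp [hri]
    have hs : ∀ u, (s u : U) = u - i (r u) := fun u => rfl
    refine ⟨LinearMap.ker r × U', _, inferInstance, κ.prod τ',
      hτ.of_bijective ((r ∘ₗ LinearMap.fst k U U').prod (s.prodMap LinearMap.id))
        (fun g x => ?_) ⟨fun x y hxy => ?_, fun x => ?_⟩⟩
    · refine Prod.ext (hr g x.1) (Prod.ext (Subtype.ext ?_) rfl)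
      change (s (τ g x.1) : U) = τ g (s x.1)
      rw [hs, hs, map_sub, hr, hi]
    · have h1 : r x.1 = r y.1 := congrArg (fun z => z.1) hxy
      have h2 : x.1 - i (r x.1) = y.1 - i (r y.1) := congrArg (fun z => (z.2.1 : U)) hxy
      rw [h1, sub_left_inj] at h2
      exact Prod.ext h2 (congrArg (fun z => z.2.2) hxy)
    · obtain ⟨v, ⟨u, hu⟩, u'⟩ := x
      rw [LinearMap.mem_ker] at hu
      refine ⟨(i v + u, u'), Prod.ext ?_ (Prod.ext (Subtype.ext ?_) rfl)⟩
      · change r (i v + u) = v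
        rw [map_add, hri, hu, add_zero]
      · change i v + u - i (r (i v + u)) = u
        rw [map_add, hri, hu, add_zero, add_sub_cancel_left]

end Filtered

end Representation

/-- the filtration theorem of Carlson:
Let `G` be a finite group and `k` a field of characteristic `p > 0` dividing `|G|`.
There exist a finitely generated `kG`-module `V` and a filtration
`0 = M_0 ⊆ M_1 ⊆ ⋯ ⊆ M_t = k ⊕ V` of `kG`-modules such that for every `i = 1,…,t` there
is an elementary abelian `p`-subgroup `E_i ⊆ G` and a finitely generated `kE_i`-module
`W_i` with `M_i/M_{i−1} ≅ (W_i)↑_{E_i}^G`, the `kG`-module induced from `W_i`.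

The subquotient condition `M_i/M_{i-1} ≅ W↑` is expressed as: there is a `G`-equivariant
`k`-linear surjection `φ : M_i → Q` with kernel `M_{i-1}`, where the `G`-representation
`Q` is induced from the subgroup `E_i` (in the sense of the imprimitivity criterion
`IsInducedFrom`, which characterises the induced modules `W↑_E^G` with `W` the
distinguished `E`-stable subspace). -/
theorem filtration_by_modules_induced_from_elementary_abelians
    (k : Type) [Field k] (G : Type) [Group G] [Fintype G]
    (p : ℕ) [Fact p.Prime] [CharP k p] (hdvd : p ∣ Fintype.card G) :
    ∃ (Vr : Rep k G) (_ : FiniteDimensional k Vr.V) (t : ℕ)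
      (M : Fin (t + 1) → Submodule k (k × Vr.V))
      (hinv : ∀ (i : Fin (t + 1)) (g : G) (x : k × Vr.V),
        x ∈ M i → trivProdRep Vr.ρ g x ∈ M i),
      M 0 = ⊥ ∧ M (Fin.last t) = ⊤
        ∧ (∀ i : Fin t, M i.castSucc ≤ M i.succ)
        ∧ ∀ i : Fin t, ∃ E : Subgroup G, IsElementaryAbelian p E ∧
            ∃ (Qr : Rep k G) (_ : FiniteDimensional k Qr.V),
              IsInducedFrom Qr.ρ E ∧
              ∃ φ : (M i.succ) →ₗ[k] Qr.V,
                Function.Surjective φ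
                ∧ LinearMap.ker φ = (M i.castSucc).comap (M i.succ).subtype
                ∧ ∀ (g : G) (x : M i.succ),
                    φ ⟨trivProdRep Vr.ρ g x.1, hinv i.succ g x.1 x.2⟩ = Qr.ρ g (φ x) := by
  obtain ⟨V, _, _, ρ, hρ⟩ := Representation.BuiltFrom.exists_inducedFiltered_prod
    (Representation.builtFrom_isElementaryAbelian_one (k := k) (G := G) (p := p))
  have := hρ.finiteDimensional
  obtain ⟨t, M, hinv, h0, hlast, hmono, hstep⟩ := hρ.exists_chain
  refine ⟨Rep.of ρ, Module.Finite.of_surjective (LinearMap.snd k k V) LinearMap.snd_surjective,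
    t, M, hinv, h0, hlast, hmono, fun i => ?_⟩
  obtain ⟨E, hE, Q, _, _, σ, hQ, hσ, φ, hφ, hker, hequiv⟩ := hstep i
  exact ⟨E, hE, Rep.of σ, hQ, hσ, φ, hφ, hker, fun g x => hequiv g x _ rfl⟩
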